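/- arXiv:2604.20187 — 8 statements merged into one kernel-verified Lean document; each statement's English description precedes it below -/
import Mathlib

section
/- Let S : ℝ³ → ℝ be continuous with compact support, and let p(x,t) := (t/(4π)) ∫_{S²} S(x + tω) dσ(ω) be the Kirchhoff solution with initial velocity S. Fix a unit vector x̂ ∈ ℝ³ and orthonormal vectors u, v such that {x̂, u, v} is an orthonormal basis of ℝ³. Then for every t ∈ ℝ, lim_{r→∞} r · p(r x̂, t + r) = (1/(4π)) ∫_{ℝ²} S(−t x̂ + a u + b v) da db. In particular the time-domain far-field pattern p^∞(x̂, t) := lim_{r→∞} r·p(r x̂, t + r) equals 1/(4π) times the integral of S over the plane {y ∈ ℝ³ : x̂ · y = −t}. -/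
open MeasureTheory Real Filter
open scoped RealInnerProductSpace Topology

local notation "E3" => EuclideanSpace ℝ (Fin 3)

lemma toSphere_integral (f : E3 → ℝ) (hf : Continuous f) :
    ∫ ω : Metric.sphere (0 : E3) 1, f ω ∂((volume : Measure E3).toSphere)
      = 3 * ∫ y in Metric.ball (0 : E3) 1, f (‖y‖⁻¹ • y) := by
  have hm : MeasurableEmbedding (Subtype.val ∘ (homeomorphUnitSphereProd E3).symm) :=
    ((MeasurableEmbedding.subtype_coe (measurableSet_singleton _).compl).comp
      (Homeomorph.measurableEmbedding _))
  rw [Measure.toSphere, Measure.fst]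
  rw [← Nat.cast_smul_eq_nsmul ENNReal, integral_smul_measure, integral_map]
  rotate_left
  · exact measurable_fst.aemeasurable
  · exact (hf.comp continuous_subtype_val).aestronglyMeasurable
  have hset : (Set.univ ×ˢ Set.Iio (⟨1, Set.mem_Ioi.2 one_pos⟩ : Set.Ioi (0:ℝ)) : Set (Metric.sphere (0 : E3) 1 × Set.Ioi (0:ℝ)))
     = (Subtype.val ∘ (homeomorphUnitSphereProd E3).symm) ⁻¹' (Metric.ball (0 : E3) 1) := by
    ext ⟨a, b⟩
    have hb : (0:ℝ) < b := b.2
    have : ‖(a:E3)‖ = 1 := by simp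
    simp [norm_smul, this, abs_of_pos hb, ← Subtype.coe_lt_coe]
  have hg : ∀ x : Metric.sphere (0 : E3) 1 × Set.Ioi (0:ℝ), f x.1 = (fun y : E3 => f (‖y‖⁻¹ • y)) ((Subtype.val ∘ (homeomorphUnitSphereProd E3).symm) x) := by
    rintro ⟨a, b⟩
    have hb : (0:ℝ) < b := b.2
    have : ‖(a:E3)‖ = 1 := by simp
    simp [norm_smul, this, abs_of_pos hb, smul_smul, hb.ne']
  rw [integral_congr_ae (Eventually.of_forall hg)]
  rw [hset, ← hm.setIntegral_map (fun y : E3 => f (‖y‖⁻¹ • y)), hm.map_comap, Measure.restrict_restrict measurableSet_ball]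
  have hr : Set.range (Subtype.val ∘ (homeomorphUnitSphereProd E3).symm) = {0}ᶜ := by
    rw [Set.range_comp, (homeomorphUnitSphereProd E3).symm.surjective.range_eq]; simp; rfl
  rw [hr]
  have : (Metric.ball (0:E3) 1 ∩ {0}ᶜ : Set E3) =ᵐ[volume] Metric.ball (0:E3) 1 := by
    rw [← Set.sdiff_eq]
    exact sdiff_null_ae_eq_self (measure_singleton _)
  rw [Measure.restrict_congr_set this]
  simp

noncomputable def frameMap (e u v : E3) (q : ℝ × (ℝ × ℝ)) : E3 := q.1 • e + q.2.1 • u + q.2.2 • v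

lemma frameMap_mp (e u v : E3) (he : ‖e‖ = 1) (hu : ‖u‖ = 1) (hv : ‖v‖ = 1)
    (heu : ⟪e, u⟫ = 0) (hev : ⟪e, v⟫ = 0) (huv : ⟪u, v⟫ = 0) :
    MeasurePreserving (frameMap e u v) volume volume := by
  have ho : Orthonormal ℝ ![e, u, v] := by
    constructor
    · intro i; fin_cases i <;> simpa
    · intro i j hij
      have h1 := real_inner_comm e u
      have h2 := real_inner_comm e v
      have h3 := real_inner_comm u v
      fin_cases i <;> fin_cases j <;> simp_all
  have hspan : ⊤ ≤ Submodule.span ℝ (Set.range ![e, u, v]) := by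
    rw [ho.linearIndependent.span_eq_top_of_card_eq_finrank (by simp)]
  let B := OrthonormalBasis.mk ho hspan
  have h1 := B.measurePreserving_repr_symm
  have h2 := EuclideanSpace.volume_preserving_symm_measurableEquiv_toLp (Fin 3)
  have h3 := (volume_preserving_piFinSuccAbove (fun _ : Fin 3 => ℝ) 0).symm
  have h4 : MeasurePreserving (Prod.map id (MeasurableEquiv.finTwoArrow (α := ℝ)).symm : ℝ × (ℝ × ℝ) → ℝ × (Fin 2 → ℝ)) volume volume :=
    (MeasurePreserving.id volume).prod ((volume_preserving_finTwoArrow ℝ).symm)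
  have h5 := (h1.comp ((PiLp.volume_preserving_toLp (Fin 3)).comp (h3.comp h4)))
  convert h5 using 1
  ext1 ⟨s, a, b⟩
  simp only [Function.comp, frameMap]
  rw [← B.sum_repr_symm]
  simp [B, Fin.sum_univ_three, MeasurableEquiv.piFinSuccAbove, MeasurableEquiv.finTwoArrow]

lemma frameMap_continuous (e u v : E3) : Continuous (frameMap e u v) := by
  unfold frameMap; fun_prop

lemma frameMap_inner (e u v : E3) (he : ‖e‖ = 1) (hu : ‖u‖ = 1) (hv : ‖v‖ = 1)
    (heu : ⟪e, u⟫ = 0) (hev : ⟪e, v⟫ = 0) (huv : ⟪u, v⟫ = 0) (q : ℝ × (ℝ × ℝ)) :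
    ⟪e, frameMap e u v q⟫ = q.1 ∧ ⟪u, frameMap e u v q⟫ = q.2.1 ∧ ⟪v, frameMap e u v q⟫ = q.2.2 ∧
    ‖frameMap e u v q‖ ^ 2 = q.1 ^ 2 + q.2.1 ^ 2 + q.2.2 ^ 2 := by
  have h1 : ⟪u, e⟫ = 0 := by rw [real_inner_comm]; exact heu
  have h2 : ⟪v, e⟫ = 0 := by rw [real_inner_comm]; exact hev
  have h3 : ⟪v, u⟫ = 0 := by rw [real_inner_comm]; exact huv
  have he2 : ⟪e, e⟫ = 1 := by rw [real_inner_self_eq_norm_sq, he]; norm_num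
  have hu2 : ⟪u, u⟫ = 1 := by rw [real_inner_self_eq_norm_sq, hu]; norm_num
  have hv2 : ⟪v, v⟫ = 1 := by rw [real_inner_self_eq_norm_sq, hv]; norm_num
  rw [← real_inner_self_eq_norm_sq]
  simp only [frameMap, inner_add_left, inner_add_right, real_inner_smul_left, real_inner_smul_right, *]
  refine ⟨?_, ?_, ?_, ?_⟩ <;> ring

lemma gnomonic (e u v : E3) (he : ‖e‖ = 1) (hu : ‖u‖ = 1) (hv : ‖v‖ = 1)
    (heu : ⟪e, u⟫ = 0) (hev : ⟪e, v⟫ = 0) (huv : ⟪u, v⟫ = 0)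
    (f : E3 → ℝ) (hf : Continuous f) (C : ℝ) (hC : ∀ y, ‖f y‖ ≤ C) (R : ℝ) (hR : 0 < R) (K : ℝ)
    (hneg : ∀ y, ⟪e, y⟫ ≤ 0 → f y = 0)
    (hK : ∀ ab : ℝ × ℝ, K < ‖ab‖ →
      f (‖frameMap e u v (R, ab)‖⁻¹ • frameMap e u v (R, ab)) = 0) :
    ∫ ω : Metric.sphere (0 : E3) 1, f ω ∂((volume : Measure E3).toSphere)
      = ∫ ab : ℝ × ℝ, f (‖frameMap e u v (R, ab)‖⁻¹ • frameMap e u v (R, ab)) *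
          (R / ‖frameMap e u v (R, ab)‖ ^ 3) := by
  have hin := frameMap_inner e u v he hu hv heu hev huv
  have hmp := frameMap_mp e u v he hu hv heu hev huv
  have hC0 : 0 ≤ C := (norm_nonneg _).trans (hC 0)
  set W : ℝ × ℝ → E3 := fun ab => frameMap e u v (R, ab) with hW
  have hWc : Continuous W := (frameMap_continuous e u v).comp (by fun_prop)
  have hWR : ∀ ab, R ≤ ‖W ab‖ := by
    intro ab
    have := (hin (R, ab)).2.2.2
    refine (pow_le_pow_iff_left₀ hR.le (norm_nonneg _) two_ne_zero).1 ?_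
    simp only [hW]; rw [this]; nlinarith [sq_nonneg ab.1, sq_nonneg ab.2]
  have hW0 : ∀ ab, 0 < ‖W ab‖ := fun ab => hR.trans_le (hWR ab)
  have hgm : Measurable (fun y : E3 => f (‖y‖⁻¹ • y)) :=
    hf.measurable.comp (measurable_norm.inv.smul measurable_id)
  set F : E3 → ℝ := (Metric.ball (0 : E3) 1).indicator (fun y => f (‖y‖⁻¹ • y)) with hF
  have hFm : Measurable F := hgm.indicator measurableSet_ball
  have hFi : Integrable F := by
    rw [hF, integrable_indicator_iff measurableSet_ball]
    exact Measure.integrableOn_of_bounded (M := C) measure_ball_lt_top.ne hgm.aestronglyMeasurable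
      (Eventually.of_forall fun y => hC _)
  rw [toSphere_integral f hf, ← integral_indicator measurableSet_ball, ← hF]
  have e1 : ∫ y, F y = ∫ q : ℝ × (ℝ × ℝ), F (frameMap e u v q) := by
    rw [← hmp.map_eq, integral_map hmp.measurable.aemeasurable hFm.aestronglyMeasurable]
  have hFi2 : Integrable (fun q : ℝ × (ℝ × ℝ) => F (frameMap e u v q)) :=
    hmp.integrable_comp_of_integrable hFi
  rw [e1, Measure.volume_eq_prod, integral_prod _ (by rwa [← Measure.volume_eq_prod])]
  have e2 : ∀ s : ℝ, ∫ ab : ℝ × ℝ, F (frameMap e u v (s, ab)) =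
      ∫ ab : ℝ × ℝ, (Set.Ioo 0 (R / ‖W ab‖)).indicator (fun s => s ^ 2 / R ^ 2) s *
        f (‖W ab‖⁻¹ • W ab) := by
    intro s
    rcases le_or_gt s 0 with hs | hs
    · have h1 : ∀ ab : ℝ × ℝ, F (frameMap e u v (s, ab)) = 0 := by
        intro ab
        rw [hF]
        refine Set.indicator_apply_eq_zero.2 fun _ => hneg _ ?_
        rw [real_inner_smul_right, (hin _).1]
        exact mul_nonpos_of_nonneg_of_nonpos (by positivity) hs
      have h2 : ∀ ab : ℝ × ℝ, (Set.Ioo 0 (R / ‖W ab‖)).indicator (fun s => s ^ 2 / R ^ 2) s = 0 :=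
        fun ab => Set.indicator_of_notMem (fun h => absurd h.1 (not_lt.2 hs)) _
      simp [h1, h2]
    · have h1 := Measure.integral_comp_smul (volume : Measure (ℝ × ℝ))
        (fun ab => F (frameMap e u v (s, ab))) (s / R)
      have hsR : 0 < s / R := by positivity
      have hfr : Module.finrank ℝ (ℝ × ℝ) = 2 := by simp
      rw [hfr, abs_of_pos (by positivity), smul_eq_mul] at h1
      have h2 : ∫ ab : ℝ × ℝ, F (frameMap e u v (s, ab)) = (s / R) ^ 2 *
          ∫ ab : ℝ × ℝ, F (frameMap e u v (s, (s / R) • ab)) := by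
        rw [h1]; field_simp
      rw [h2, ← integral_const_mul]
      congr 1 with ab
      have h3 : frameMap e u v (s, (s / R) • ab) = (s / R) • W ab := by
        simp only [hW, frameMap, smul_add, smul_smul, Prod.smul_fst, Prod.smul_snd, smul_eq_mul]
        rw [div_mul_cancel₀ _ hR.ne']
      have h4 : ‖(s / R) • W ab‖ = s / R * ‖W ab‖ := by rw [norm_smul, Real.norm_of_nonneg hsR.le]
      have h5 : (s / R * ‖W ab‖)⁻¹ • (s / R) • W ab = ‖W ab‖⁻¹ • W ab := by
        rw [smul_smul]; congr 1
        have := (hW0 ab).ne'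
        field_simp
      rw [h3, hF]
      by_cases hlt : s < R / ‖W ab‖
      · have hb : (s / R) • W ab ∈ Metric.ball (0 : E3) 1 := by
          rw [mem_ball_zero_iff, h4]
          rw [lt_div_iff₀ (hW0 ab)] at hlt
          rw [div_mul_eq_mul_div, div_lt_one hR]; exact hlt
        rw [Set.indicator_of_mem hb, Set.indicator_of_mem (show s ∈ Set.Ioo 0 (R / ‖W ab‖) from ⟨hs, hlt⟩), h4, h5, div_pow]
      · have hb : (s / R) • W ab ∉ Metric.ball (0 : E3) 1 := by
          rw [mem_ball_zero_iff, h4]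
          rw [lt_div_iff₀ (hW0 ab)] at hlt
          rw [div_mul_eq_mul_div, div_lt_one hR]; exact hlt
        rw [Set.indicator_of_notMem hb, Set.indicator_of_notMem (fun h => hlt h.2)]
        simp
  simp_rw [e2]
  rw [integral_integral_swap, ← integral_const_mul]
  · congr 1 with ab
    change _ = f (‖W ab‖⁻¹ • W ab) * (R / ‖W ab‖ ^ 3)
    rw [integral_mul_const, integral_indicator measurableSet_Ioo, ← integral_Ioc_eq_integral_Ioo,
      ← intervalIntegral.integral_of_le (div_nonneg hR.le (norm_nonneg _)),
      intervalIntegral.integral_div, integral_pow]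
    have := (hW0 ab).ne'
    field_simp
    norm_num
    field_simp
    simp
  · have hset : MeasurableSet {q : ℝ × (ℝ × ℝ) | 0 < q.1 ∧ q.1 < R / ‖W q.2‖} := by
      apply MeasurableSet.inter
      · exact measurableSet_lt measurable_const measurable_fst
      · exact measurableSet_lt measurable_fst
          (measurable_const.div (hWc.measurable.comp measurable_snd).norm)
    have hsup : Function.support (Function.uncurry fun (s : ℝ) (ab : ℝ × ℝ) =>
        (Set.Ioo 0 (R / ‖W ab‖)).indicator (fun s => s ^ 2 / R ^ 2) s * f (‖W ab‖⁻¹ • W ab)) ⊆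
        Set.Ioo (0 : ℝ) 1 ×ˢ Metric.closedBall (0 : ℝ × ℝ) K := by
      rintro ⟨s, ab⟩ h
      simp only [Function.mem_support, Function.uncurry_apply_pair] at h
      have ha := left_ne_zero_of_mul h
      have hb := right_ne_zero_of_mul h
      have hs := Set.mem_of_indicator_ne_zero ha
      refine ⟨⟨hs.1, hs.2.trans_le ((div_le_one (hW0 ab)).2 (hWR ab))⟩, ?_⟩
      rw [mem_closedBall_zero_iff]
      by_contra hcon
      exact hb (hK ab (not_le.1 hcon))
    rw [← integrableOn_iff_integrable_of_support_subset hsup]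
    refine Measure.integrableOn_of_bounded (M := 1 / R ^ 2 * C) ?_ ?_ (Eventually.of_forall ?_)
    · rw [Measure.prod_prod]
      exact ENNReal.mul_ne_top (by simp) measure_closedBall_lt_top.ne
    · apply Measurable.aestronglyMeasurable
      have : (Function.uncurry fun (s : ℝ) (ab : ℝ × ℝ) =>
        (Set.Ioo 0 (R / ‖W ab‖)).indicator (fun s => s ^ 2 / R ^ 2) s * f (‖W ab‖⁻¹ • W ab)) =
        fun q => {q : ℝ × (ℝ × ℝ) | 0 < q.1 ∧ q.1 < R / ‖W q.2‖}.indicator (fun q => q.1 ^ 2 / R ^ 2) q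
          * f (‖W q.2‖⁻¹ • W q.2) := by
        ext ⟨s, ab⟩
        simp only [Function.uncurry_apply_pair]
        rfl
      rw [this]
      refine Measurable.mul (Measurable.indicator (by fun_prop) hset) ?_
      exact hgm.comp (hWc.measurable.comp measurable_snd)
    · rintro ⟨s, ab⟩
      simp only [Function.uncurry_apply_pair]
      rw [norm_mul]
      refine mul_le_mul ?_ (hC _) (norm_nonneg _) (by positivity)
      by_cases hs : s ∈ Set.Ioo 0 (R / ‖W ab‖)
      · rw [Set.indicator_of_mem hs, Real.norm_of_nonneg (by positivity)]
        have : s ≤ 1 := hs.2.le.trans ((div_le_one (hW0 ab)).2 (hWR ab))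
        gcongr
        nlinarith [hs.1]
      · rw [Set.indicator_of_notMem hs]; simp; positivity

lemma aux_bound {R N q : ℝ} (hR : 0 < R) (hN : R ≤ N) (h6 : q = N ^ 2 - R ^ 2) :
    R * (1 - R / N) ≤ q / R := by
  have hN0 : 0 < N := hR.trans_le hN
  rw [le_div_iff₀ hR]
  have h5 : R * (1 - R / N) * R = R ^ 2 * (N - R) / N := by field_simp
  rw [h5, div_le_iff₀ hN0, h6]
  have h7 : 0 ≤ N - R := by linarith
  have h8 : R ^ 2 ≤ (N + R) * N := by nlinarith
  nlinarith [mul_le_mul_of_nonneg_left h8 h7]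

set_option maxHeartbeats 1000000 in
/-- **Time-domain far-field pattern in 3D** (Theorem 3.1, `d = 3`).
Let `S : ℝ³ → ℝ` be continuous with compact support and let
`p(x,t) = (t/(4π)) ∫_{S²} S(x + tω) dσ(ω)` be the Kirchhoff solution with initial
velocity `S`. Fix a unit vector `x̂` and orthonormal vectors `u, v` completing it to an
orthonormal basis of `ℝ³`. Then for every `t ∈ ℝ`,
`lim_{r→∞} r p(r x̂, t + r) = (1/(4π)) ∫_{ℝ²} S(−t x̂ + a u + b v) da db`. -/
theorem far_field_pattern_3d
    (σ : Measure (Metric.sphere (0 : EuclideanSpace ℝ (Fin 3)) 1))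
    (hσ : σ = (volume : Measure (EuclideanSpace ℝ (Fin 3))).toSphere)
    (S : EuclideanSpace ℝ (Fin 3) → ℝ)
    (hS : Continuous S) (hsupp : HasCompactSupport S)
    (p : EuclideanSpace ℝ (Fin 3) → ℝ → ℝ)
    (hp : ∀ x t, p x t = (t / (4 * π)) *
      ∫ ω : Metric.sphere (0 : EuclideanSpace ℝ (Fin 3)) 1,
        S (x + t • (ω : EuclideanSpace ℝ (Fin 3))) ∂σ)
    (xhat u v : EuclideanSpace ℝ (Fin 3))
    (hxhat : ‖xhat‖ = 1) (hu : ‖u‖ = 1) (hv : ‖v‖ = 1)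
    (hxu : ⟪xhat, u⟫ = 0) (hxv : ⟪xhat, v⟫ = 0) (huv : ⟪u, v⟫ = 0)
    (t : ℝ) :
    Tendsto (fun r : ℝ => r * p (r • xhat) (t + r)) atTop
      (𝓝 ((1 / (4 * π)) *
        ∫ ab : ℝ × ℝ, S ((-t) • xhat + ab.1 • u + ab.2 • v))) := by
  subst hσ
  set e : E3 := -xhat with he_def
  have he : ‖e‖ = 1 := by simp [he_def, hxhat]
  have heu : ⟪e, u⟫ = 0 := by simp [he_def, hxu]
  have hev : ⟪e, v⟫ = 0 := by simp [he_def, hxv]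
  have hin := frameMap_inner e u v he hu hv heu hev huv
  obtain ⟨C, hC⟩ := hS.bounded_above_of_compact_support hsupp
  have hC0 : 0 ≤ C := (norm_nonneg _).trans (hC 0)
  obtain ⟨M, hM⟩ := hsupp.isCompact.isBounded.subset_closedBall (0 : E3)
  have hM' : ∀ y, M < ‖y‖ → S y = 0 := by
    intro y hy
    by_contra h
    have := hM (subset_tsupport _ h)
    rw [mem_closedBall_zero_iff] at this
    linarith
  have hxx : ⟪xhat, xhat⟫ = 1 := by rw [real_inner_self_eq_norm_sq, hxhat]; norm_num
  have hWR : ∀ R : ℝ, 0 < R → ∀ ab : ℝ × ℝ, R ≤ ‖frameMap e u v (R, ab)‖ := by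
    intro R hR ab
    have := (hin (R, ab)).2.2.2
    refine (pow_le_pow_iff_left₀ hR.le (norm_nonneg _) two_ne_zero).1 ?_
    rw [this]; simp only; nlinarith [sq_nonneg ab.1, sq_nonneg ab.2]
  -- support in the plane variables
  have hsup : ∀ r : ℝ, 0 < t + r → 2 * M + t ≤ r → ∀ ab : ℝ × ℝ, 2 * M < ‖ab‖ →
      S (r • xhat + (t + r) • (‖frameMap e u v (t + r, ab)‖⁻¹ • frameMap e u v (t + r, ab))) = 0 := by
    intro r hR hr ab hab
    by_contra hne
    have hle : ‖r • xhat + (t + r) • (‖frameMap e u v (t + r, ab)‖⁻¹ • frameMap e u v (t + r, ab))‖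
        ≤ M := by
      by_contra h; exact hne (hM' _ (not_le.1 h))
    have hN := hWR (t + r) hR ab
    obtain ⟨i1, i2, i3, -⟩ := hin (t + r, ab)
    set w := frameMap e u v (t + r, ab) with hw
    have hN0 : 0 < ‖w‖ := hR.trans_le hN
    rw [smul_smul] at hle
    set c := (t + r) * ‖w‖⁻¹ with hc
    have hc0 : 0 < c := by positivity
    have j1 := (abs_real_inner_le_norm e (r • xhat + c • w))
    have j2 := (abs_real_inner_le_norm u (r • xhat + c • w))
    have j3 := (abs_real_inner_le_norm v (r • xhat + c • w))
    have k1 : ⟪e, xhat⟫ = -1 := by simp [he_def, hxhat]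
    have k2 : ⟪u, xhat⟫ = 0 := by rw [real_inner_comm]; exact hxu
    have k3 : ⟪v, xhat⟫ = 0 := by rw [real_inner_comm]; exact hxv
    rw [inner_add_right, real_inner_smul_right, real_inner_smul_right] at j1 j2 j3
    rw [i1, k1, he] at j1
    rw [i2, k2, hu] at j2
    rw [i3, k3, hv] at j3
    simp only at j1 j2 j3
    have l1 := (abs_le.1 (j1.trans (by linarith : _ ≤ M))).1
    have hch : 1 / 2 ≤ c := by
      by_contra h
      push Not at h
      nlinarith
    have l2 : |c * ab.1| ≤ M := by
      have := j2.trans (by linarith : _ ≤ M); simpa using this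
    have l3 : |c * ab.2| ≤ M := by
      have := j3.trans (by linarith : _ ≤ M); simpa using this
    rw [abs_mul, abs_of_pos hc0] at l2 l3
    have m1 : |ab.1| ≤ 2 * M := by nlinarith [abs_nonneg ab.1]
    have m2 : |ab.2| ≤ 2 * M := by nlinarith [abs_nonneg ab.2]
    have : ‖ab‖ ≤ 2 * M := by
      rw [Prod.norm_def]; exact max_le m1 m2
    linarith
  have hform : ∀ᶠ r : ℝ in atTop, (1 / (4 * π)) * ∫ ab : ℝ × ℝ,
      S (r • xhat + (t + r) • (‖frameMap e u v (t + r, ab)‖⁻¹ • frameMap e u v (t + r, ab))) *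
        (r * (t + r) ^ 2 / ‖frameMap e u v (t + r, ab)‖ ^ 3) = r * p (r • xhat) (t + r) := by
    filter_upwards [eventually_gt_atTop (-t), eventually_ge_atTop (2 * M + t),
      eventually_gt_atTop M] with r h1 h2 h3
    have hR : 0 < t + r := by linarith
    rw [hp, gnomonic e u v he hu hv heu hev huv (fun y => S (r • xhat + (t + r) • y))
      (hS.comp (by fun_prop)) C (fun y => hC _) (t + r) hR (2 * M) ?_ (hsup r hR h2)]
    · rw [← integral_const_mul, ← integral_const_mul, ← integral_const_mul]
      congr 1 with ab
      ring
    · intro y hy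
      apply hM'
      have j := real_inner_le_norm xhat (r • xhat + (t + r) • y)
      rw [inner_add_right, real_inner_smul_right, real_inner_smul_right, hxx, hxhat] at j
      have hy' : 0 ≤ ⟪xhat, y⟫ := by simpa [he_def] using hy
      nlinarith [mul_nonneg hR.le hy']
  refine Tendsto.congr' hform (Tendsto.const_mul _ ?_)
  refine tendsto_integral_filter_of_dominated_convergence
    ((Metric.closedBall (0 : ℝ × ℝ) (2 * M)).indicator (fun _ => C * 2)) ?_ ?_ ?_ ?_
  · refine Eventually.of_forall fun r => Measurable.aestronglyMeasurable ?_
    have hw : Measurable (fun ab : ℝ × ℝ => frameMap e u v (t + r, ab)) :=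
      ((frameMap_continuous e u v).comp (by fun_prop)).measurable
    refine Measurable.mul (hS.measurable.comp ?_) ?_
    · have hw2 : Measurable (fun ab : ℝ × ℝ =>
          ‖frameMap e u v (t + r, ab)‖⁻¹ • frameMap e u v (t + r, ab)) := hw.norm.inv.smul hw
      have hw3 : Measurable (fun ab : ℝ × ℝ => (t + r) •
          ‖frameMap e u v (t + r, ab)‖⁻¹ • frameMap e u v (t + r, ab)) := hw2.const_smul (t + r)
      exact measurable_const.add hw3
    · exact measurable_const.div (hw.norm.pow_const 3)
  · filter_upwards [eventually_gt_atTop (-t), eventually_ge_atTop (2 * M + t),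
      eventually_gt_atTop 0, eventually_gt_atTop (-2 * t)] with r h1 h2 h3 h4
    have hR : 0 < t + r := by linarith
    refine Eventually.of_forall fun ab => ?_
    by_cases hab : ‖ab‖ ≤ 2 * M
    · rw [Set.indicator_of_mem (by simpa using hab), norm_mul]
      refine mul_le_mul (hC _) ?_ (norm_nonneg _) hC0
      have hN := hWR (t + r) hR ab
      have hN0 := hR.trans_le hN
      rw [Real.norm_of_nonneg (by positivity), div_le_iff₀ (by positivity)]
      have : (t + r) ^ 3 ≤ ‖frameMap e u v (t + r, ab)‖ ^ 3 := by gcongr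
      nlinarith [mul_nonneg (sq_nonneg (t + r)) (by linarith : 0 ≤ 2 * (t + r) - r)]
    · rw [hsup r hR h2 ab (not_le.1 hab)]
      simp only [zero_mul, norm_zero]
      exact Set.indicator_nonneg (fun _ _ => by positivity) _
  · rw [integrable_indicator_iff Metric.isClosed_closedBall.measurableSet]
    exact integrableOn_const measure_closedBall_lt_top.ne
  · refine Eventually.of_forall fun ab => ?_
    have hRt : Tendsto (fun r : ℝ => t + r) atTop atTop := tendsto_atTop_add_const_left _ _ tendsto_id
    -- c r = R / N
    have hd : Tendsto (fun r : ℝ => (t + r) * (1 - (t + r) / ‖frameMap e u v (t + r, ab)‖)) atTop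
        (𝓝 0) := by
      refine tendsto_of_tendsto_of_tendsto_of_le_of_le' tendsto_const_nhds
        (hRt.const_div_atTop (ab.1 ^ 2 + ab.2 ^ 2)) ?_ ?_
      · filter_upwards [eventually_gt_atTop (-t)] with r h1
        have hR : 0 < t + r := by linarith
        have hN := hWR (t + r) hR ab
        have hN0 := hR.trans_le hN
        have : (t + r) / ‖frameMap e u v (t + r, ab)‖ ≤ 1 := (div_le_one hN0).2 hN
        exact mul_nonneg hR.le (by linarith)
      · filter_upwards [eventually_gt_atTop (-t)] with r h1
        have hR : 0 < t + r := by linarith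
        have hN := hWR (t + r) hR ab
        have hN0 := hR.trans_le hN
        have hsq := (hin (t + r, ab)).2.2.2
        simp only at hsq
        exact aux_bound hR hN (by linarith)
    have hc : Tendsto (fun r : ℝ => (t + r) / ‖frameMap e u v (t + r, ab)‖) atTop (𝓝 1) := by
      have h1 := hd.mul (tendsto_inv_atTop_zero.comp hRt)
      have h2 := (tendsto_const_nhds (x := (1 : ℝ))).sub h1
      rw [mul_zero, sub_zero] at h2
      refine h2.congr' ?_
      filter_upwards [eventually_gt_atTop (-t)] with r h1
      have hR : t + r ≠ 0 := by linarith
      simp only [Function.comp]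
      rw [mul_comm (t + r), mul_assoc, mul_inv_cancel₀ hR]
      ring
    have hrR : Tendsto (fun r : ℝ => r * (t + r) ^ 2 / ‖frameMap e u v (t + r, ab)‖ ^ 3) atTop (𝓝 1) := by
      have h1 : Tendsto (fun r : ℝ => 1 - t / (t + r)) atTop (𝓝 (1 - 0)) :=
        tendsto_const_nhds.sub (hRt.const_div_atTop t)
      have h2 := h1.mul (hc.pow 3)
      simp only [sub_zero, one_pow, mul_one] at h2
      refine h2.congr' ?_
      filter_upwards [eventually_gt_atTop (-t)] with r h1
      have hR : 0 < t + r := by linarith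
      have hN0 := hR.trans_le (hWR (t + r) hR ab)
      field_simp
      ring
    have harg : Tendsto (fun r : ℝ => r • xhat +
        (t + r) • (‖frameMap e u v (t + r, ab)‖⁻¹ • frameMap e u v (t + r, ab))) atTop
        (𝓝 ((-t) • xhat + ab.1 • u + ab.2 • v)) := by
      have h1 := (((tendsto_const_nhds (x := -t)).add hd).smul_const xhat).add
        ((hc.smul_const (ab.1 • u)).add (hc.smul_const (ab.2 • v)))
      rw [add_zero, one_smul, one_smul, ← add_assoc] at h1
      refine h1.congr fun r => ?_
      have h2 : frameMap e u v (t + r, ab) = -((t + r) • xhat) + ab.1 • u + ab.2 • v := by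
        simp [frameMap, he_def]
      generalize ‖frameMap e u v (t + r, ab)‖ = N
      rw [h2]
      module
    have := ((hS.tendsto _).comp harg).mul hrR
    rw [mul_one] at this
    exact this
end

section
/- Let S : ℝ² → ℝ be continuous with compact support, and let p(x,t) := ∫_{ℝ²} 1_{{|x−y| < t}} · S(y) / (2π √(t² − |x−y|²)) dy be the solution of the two-dimensional wave equation with zero initial value and initial velocity S. Then for every unit vector x̂ ∈ ℝ² and every t ∈ ℝ, lim_{r→∞} √r · p(r x̂, t + r) = (1/(2√2 π)) ∫_{ℝ²} 1_{{t + x̂·y > 0}} (t + x̂·y)^{−1/2} S(y) dy. -/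
open MeasureTheory Real Filter
open scoped RealInnerProductSpace Topology

abbrev E2 := EuclideanSpace ℝ (Fin 2)

lemma exists_coord (xhat : E2) (hx : ‖xhat‖ = 1) :
    ∃ Φ : ℝ × ℝ → E2, Continuous Φ ∧ MeasurePreserving Φ volume volume ∧
      (∀ z, ‖Φ z‖ ^ 2 = z.1 ^ 2 + z.2 ^ 2) ∧ (∀ z, ⟪xhat, Φ z⟫ = z.1) := by
  obtain ⟨b, hb⟩ := Orthonormal.exists_orthonormalBasis_extension_of_card_eq (𝕜 := ℝ) (E := E2)
    (ι := Fin 2) (by simp) (v := fun _ => xhat) (s := {0}) (by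
      rw [orthonormal_iff_ite]
      rintro ⟨i, hi⟩ ⟨j, hj⟩
      simp at hi hj
      subst hi; subst hj
      simp [hx])
  have h0 : b 0 = xhat := hb 0 (by simp)
  have hform : ∀ z : ℝ × ℝ, b.repr.symm (WithLp.toLp 2 (MeasurableEquiv.finTwoArrow.symm z))
      = z.1 • b 0 + z.2 • b 1 := by
    intro z
    rw [← b.sum_repr_symm]
    simp [Fin.sum_univ_two, MeasurableEquiv.finTwoArrow]
  have h00 : ⟪b 0, b 0⟫ = 1 := by simp
  have h11 : ⟪b 1, b 1⟫ = 1 := by simp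
  have h01 : ⟪b 0, b 1⟫ = 0 := b.orthonormal.2 (by decide)
  refine ⟨fun z => b.repr.symm (WithLp.toLp 2 (MeasurableEquiv.finTwoArrow.symm z)), ?_, ?_, ?_, ?_⟩
  · simp_rw [hform]; fun_prop
  · exact b.measurePreserving_repr_symm.comp ((PiLp.volume_preserving_toLp (Fin 2)).comp
      ((volume_preserving_finTwoArrow ℝ).symm _))
  · intro z
    simp only [hform]
    rw [← real_inner_self_eq_norm_sq]
    simp only [inner_add_left, inner_add_right, real_inner_smul_left, real_inner_smul_right,
      real_inner_comm (b 0) (b 1), h00, h11, h01]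
    ring
  · intro z
    simp only [hform]
    rw [← h0]
    simp only [inner_add_right, real_inner_smul_right, h00, h01]
    ring

lemma shear_mp (Φ : ℝ × ℝ → E2) (hΦ : MeasurePreserving Φ volume volume)
    (c : ℝ → ℝ) (hc : Measurable c) :
    MeasurePreserving (fun z : ℝ × ℝ => Φ (z.2 - c z.1, z.1)) volume volume := by
  have h1 : MeasurePreserving (fun z : ℝ × ℝ => (z.1, z.2 - c z.1)) volume volume := by
    refine MeasurePreserving.skew_product (f := fun b : ℝ => b) (g := fun b u => u - c b)
      (MeasurePreserving.id _) (by simp only [Function.uncurry_def]; fun_prop) ?_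
    exact Eventually.of_forall fun b => (measurePreserving_sub_right volume (c b)).map_eq
  have h2 : MeasurePreserving (Prod.swap : ℝ × ℝ → ℝ × ℝ) volume volume :=
    Measure.measurePreserving_swap
  exact hΦ.comp (h2.comp h1)

lemma integral_shear (Φ : ℝ × ℝ → E2) (hΦ : MeasurePreserving Φ volume volume)
    (c : ℝ → ℝ) (hc : Measurable c) (G : E2 → ℝ) (hG : Measurable G) :
    ∫ y, G y = ∫ z : ℝ × ℝ, G (Φ (z.2 - c z.1, z.1)) := by
  have h := shear_mp Φ hΦ c hc
  conv_lhs => rw [← h.map_eq]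
  exact integral_map h.measurable.aemeasurable hG.aestronglyMeasurable

lemma lim_ratio (t b : ℝ) :
    Tendsto (fun r : ℝ => √((t + r) ^ 2 - b ^ 2) / r) atTop (𝓝 1) := by
  have h1 : Tendsto (fun r : ℝ => √((t * r⁻¹ + 1) ^ 2 - (b * r⁻¹) ^ 2)) atTop
      (𝓝 (√((t * 0 + 1) ^ 2 - (b * 0) ^ 2))) := by
    have := tendsto_inv_atTop_zero (𝕜 := ℝ)
    exact ((((this.const_mul t).add_const 1).pow 2).sub ((this.const_mul b).pow 2)).sqrt
  simp at h1
  refine h1.congr' ?_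
  filter_upwards [eventually_gt_atTop 0] with r hr
  rw [eq_div_iff hr.ne']
  nth_rewrite 3 [← Real.sqrt_sq hr.le]
  rw [← Real.sqrt_mul' _ (by positivity)]
  congr 1
  field_simp

lemma lim_diff (t b : ℝ) :
    Tendsto (fun r : ℝ => √((t + r) ^ 2 - b ^ 2) - r) atTop (𝓝 t) := by
  have h0 := tendsto_inv_atTop_zero (𝕜 := ℝ)
  have h1 := ((h0.const_mul (t ^ 2 - b ^ 2)).const_add (2 * t)).div
    ((lim_ratio t b).add_const 1) (by norm_num)
  have e : (2 * t + (t ^ 2 - b ^ 2) * 0) / (1 + 1) = t := by ring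
  rw [e] at h1
  refine h1.congr' ?_
  filter_upwards [eventually_gt_atTop 0, eventually_ge_atTop (|b| - t)] with r hr hr2
  have hnn : 0 ≤ (t + r) ^ 2 - b ^ 2 := by
    have : |b| ≤ t + r := by linarith
    have := sq_le_sq' (by linarith [abs_nonneg b]) this
    rw [sq_abs] at this; linarith
  have hs := Real.sq_sqrt hnn
  have hs0 := Real.sqrt_nonneg ((t + r) ^ 2 - b ^ 2)
  simp only [Pi.div_apply]
  have : 0 < √((t + r) ^ 2 - b ^ 2) / r + 1 := by positivity
  rw [div_eq_iff this.ne']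
  field_simp
  nlinarith

lemma bound_integrable (C R M : ℝ) (hM : 0 ≤ M) : Integrable (fun z : ℝ × ℝ =>
    (Set.Icc (-R) R).indicator (fun _ => C) z.1 *
      (Set.Ioc 0 M).indicator (fun u => (√u)⁻¹) z.2) volume := by
  refine Integrable.mul_prod (μ := volume) (ν := volume) ?_ ?_
  · rw [integrable_indicator_iff measurableSet_Icc]
    exact integrableOn_const (by simp)
  · rw [integrable_indicator_iff measurableSet_Ioc]
    have := (intervalIntegral.intervalIntegrable_rpow' (a := 0) (b := M) (r := -(1/2))
      (by norm_num))
    rw [intervalIntegrable_iff_integrableOn_Ioc_of_le hM] at this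
    refine this.congr_fun (fun u hu => ?_) measurableSet_Ioc
    simp only
    rw [Real.rpow_neg hu.1.le, Real.sqrt_eq_rpow]

/-- **Time-domain far-field pattern in 2D** (Theorem 3.1, `d = 2`).
Let `S : ℝ² → ℝ` be continuous with compact support and let
`p(x,t) = ∫_{|x−y|<t} S(y)/(2π√(t²−|x−y|²)) dy` be the Poisson solution of the 2D wave
equation with zero initial value and initial velocity `S`. Then for every unit vector
`x̂ ∈ ℝ²` and every `t ∈ ℝ`,
`lim_{r→∞} √r p(r x̂, t + r) = (1/(2√2 π)) ∫_{t + x̂·y > 0} (t + x̂·y)^{−1/2} S(y) dy`. -/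
theorem far_field_pattern_2d
    (S : EuclideanSpace ℝ (Fin 2) → ℝ)
    (hS : Continuous S) (hsupp : HasCompactSupport S)
    (p : EuclideanSpace ℝ (Fin 2) → ℝ → ℝ)
    (hp : ∀ x t, p x t =
      ∫ y : EuclideanSpace ℝ (Fin 2),
        if ‖x - y‖ < t then S y / (2 * π * Real.sqrt (t ^ 2 - ‖x - y‖ ^ 2)) else 0)
    (xhat : EuclideanSpace ℝ (Fin 2)) (hxhat : ‖xhat‖ = 1) (t : ℝ) :
    Tendsto (fun r : ℝ => Real.sqrt r * p (r • xhat) (t + r)) atTop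
      (𝓝 ((1 / (2 * Real.sqrt 2 * π)) *
        ∫ y : EuclideanSpace ℝ (Fin 2),
          if 0 < t + ⟪xhat, y⟫ then (Real.sqrt (t + ⟪xhat, y⟫))⁻¹ * S y else 0)) := by
  obtain ⟨Φ, hΦc, hΦ, hΦn, hΦi⟩ := exists_coord xhat hxhat
  obtain ⟨R, hR0, hR⟩ : ∃ R, 0 < R ∧ ∀ y, S y ≠ 0 → ‖y‖ ≤ R := by
    obtain ⟨R, h⟩ := hsupp.isCompact.isBounded.exists_norm_le
    exact ⟨max R 1, by positivity, fun y hy => (h y (subset_tsupport _ hy)).trans (le_max_left _ _)⟩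
  obtain ⟨C, hC⟩ := hS.bounded_above_of_compact_support hsupp
  have hC0 : 0 ≤ C := (norm_nonneg _).trans (hC 0)
  set d : ℝ → ℝ → ℝ := fun r b => √((t + r) ^ 2 - b ^ 2) with hd
  have hdm : ∀ r, Measurable (d r) := fun r => by simp only [hd]; fun_prop
  set G : ℝ → E2 → ℝ := fun r y =>
    (2 * π)⁻¹ * (√r * (√((t + r) ^ 2 - ‖r • xhat - y‖ ^ 2))⁻¹) * S y with hG
  have hGm : ∀ r, Measurable (G r) := fun r => by
    have := hS.measurable
    simp only [hG]; fun_prop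
  set L : E2 → ℝ := fun y => (2 * π)⁻¹ * (√(2 * (t + ⟪xhat, y⟫)))⁻¹ * S y with hL
  have hLm : Measurable L := by
    have := hS.measurable
    have h2 : Measurable fun y : E2 => ⟪xhat, y⟫ := by
      apply Continuous.measurable; fun_prop
    simp only [hL]; fun_prop
  -- target
  have htarget : (1 / (2 * Real.sqrt 2 * π)) *
        ∫ y : EuclideanSpace ℝ (Fin 2),
          (if 0 < t + ⟪xhat, y⟫ then (Real.sqrt (t + ⟪xhat, y⟫))⁻¹ * S y else 0)
      = ∫ z : ℝ × ℝ, L (Φ (z.2 - t, z.1)) := by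
    rw [← integral_shear Φ hΦ (fun _ => t) measurable_const L hLm, ← integral_const_mul]
    congr 1
    ext y
    simp only [hL]
    rw [Real.sqrt_mul (by norm_num)]
    split_ifs with h
    · field_simp
    · rw [Real.sqrt_eq_zero_of_nonpos (not_lt.1 h)]; simp
  have hsource : ∀ᶠ r in atTop, ∫ z : ℝ × ℝ, G r (Φ (z.2 - (d r z.1 - r), z.1))
      = √r * p (r • xhat) (t + r) := by
    filter_upwards [eventually_gt_atTop (-t)] with r hr
    rw [← integral_shear Φ hΦ (fun b => d r b - r) ((hdm r).sub_const r) (G r) (hGm r), hp,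
      ← integral_const_mul]
    congr 1
    ext y
    simp only [hG]
    split_ifs with h
    · rw [div_eq_mul_inv, mul_inv]; ring
    · rw [Real.sqrt_eq_zero_of_nonpos (x := (t + r) ^ 2 - ‖r • xhat - y‖ ^ 2)]
      · simp
      · have : 0 ≤ t + r := by linarith
        have := pow_le_pow_left₀ this (not_lt.1 h) 2
        linarith
  rw [htarget]
  refine Tendsto.congr' hsource ?_
  -- key identity
  have hkey : ∀ r b u, |b| ≤ t + r →
      (t + r) ^ 2 - ‖r • xhat - Φ (u - (d r b - r), b)‖ ^ 2 = u * (2 * d r b - u) := by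
    intro r b u hb
    have hnn : 0 ≤ (t + r) ^ 2 - b ^ 2 := by
      have := sq_le_sq' (by linarith [abs_nonneg b]) hb
      rw [sq_abs] at this; linarith
    have hs : d r b ^ 2 = (t + r) ^ 2 - b ^ 2 := Real.sq_sqrt hnn
    rw [norm_sub_sq_real, hΦn, norm_smul, hxhat, real_inner_smul_left, hΦi, mul_one,
      Real.norm_eq_abs, sq_abs]
    simp only
    linear_combination -hs
  refine tendsto_integral_filter_of_dominated_convergence
    (fun z : ℝ × ℝ => (Set.Icc (-R) R).indicator (fun _ => C) z.1 *
      (Set.Ioc 0 (R + |t|)).indicator (fun u => (√u)⁻¹) z.2) ?_ ?_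
    (bound_integrable C R _ (by positivity)) ?_
  · refine Eventually.of_forall fun r => Measurable.aestronglyMeasurable ?_
    exact (hGm r).comp
      (shear_mp Φ hΦ (fun b => d r b - r) ((hdm r).sub_const r)).measurable
  · filter_upwards [eventually_ge_atTop (2 * R), eventually_ge_atTop (R - t)] with r hr1 hr2
    refine Eventually.of_forall fun ⟨b, u⟩ => ?_
    have hbn : 0 ≤ (Set.Icc (-R) R).indicator (fun _ => C) b *
      (Set.Ioc 0 (R + |t|)).indicator (fun u => (√u)⁻¹) u :=
      mul_nonneg (Set.indicator_nonneg (fun _ _ => hC0) _)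
        (Set.indicator_nonneg (fun _ _ => by positivity) _)
    simp only
    by_cases hz : S (Φ (u - (d r b - r), b)) = 0
    · simp only [hG, hz, mul_zero, norm_zero]; exact hbn
    have hy := hR _ hz
    have hn := hΦn (u - (d r b - r), b)
    simp only at hn
    have hy2 := pow_le_pow_left₀ (norm_nonneg _) hy 2
    have hbR : |b| ≤ R := abs_le_of_sq_le_sq (by nlinarith [sq_nonneg (u - (d r b - r))]) hR0.le
    have haR : |u - (d r b - r)| ≤ R := abs_le_of_sq_le_sq (by nlinarith [sq_nonneg b]) hR0.le
    have hd0 : 0 ≤ d r b := Real.sqrt_nonneg _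
    have hdle : d r b ≤ t + r := Real.sqrt_le_iff.2 ⟨by linarith, by nlinarith [sq_nonneg b]⟩
    have ha := abs_le.1 haR
    have hge : r / 2 ≤ 2 * d r b - u := by linarith
    rcases le_or_gt u 0 with hu | hu
    · simp only [hG]
      rw [hkey r b u (by linarith), Real.sqrt_eq_zero_of_nonpos (x := u * (2 * d r b - u))]
      · simpa using hbn
      · exact mul_nonpos_of_nonpos_of_nonneg hu (by linarith)
    · have hr0 : 0 < r := by linarith
      rw [Set.indicator_of_mem (by exact abs_le.1 hbR), Set.indicator_of_mem
        (show u ∈ Set.Ioc 0 (R + |t|) from ⟨hu, by linarith [le_abs_self t]⟩)]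
      simp only [hG]
      rw [hkey r b u (by linarith), norm_mul, mul_comm C]
      refine mul_le_mul ?_ (hC _) (norm_nonneg _) (by positivity)
      rw [Real.norm_of_nonneg (by positivity), Real.sqrt_mul hu.le, mul_inv]
      have h1 : √r ≤ 2 * √(2 * d r b - u) := by
        rw [Real.sqrt_le_iff]
        refine ⟨by positivity, ?_⟩
        rw [mul_pow, Real.sq_sqrt (by linarith)]; linarith
      have h2 : 0 < √(2 * d r b - u) := Real.sqrt_pos.2 (by linarith)
      have h3 : (2 * π)⁻¹ * (√r * (√(2 * d r b - u))⁻¹) ≤ 1 := by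
        have : √r * (√(2 * d r b - u))⁻¹ ≤ 2 := by
          rw [← div_eq_mul_inv, div_le_iff₀ h2]; exact h1
        rw [inv_mul_le_iff₀ (by positivity)]
        linarith [Real.pi_gt_three]
      calc _ = ((2 * π)⁻¹ * (√r * (√(2 * d r b - u))⁻¹)) * (√u)⁻¹ := by ring
        _ ≤ 1 * (√u)⁻¹ := by gcongr
        _ = _ := one_mul _
  · refine Eventually.of_forall fun ⟨b, u⟩ => ?_
    simp only
    have hSl : Tendsto (fun r => S (Φ (u - (d r b - r), b))) atTop (𝓝 (S (Φ (u - t, b)))) := by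
      refine ((hS.comp hΦc).tendsto _).comp ?_
      exact (tendsto_const_nhds.sub (lim_diff t b)).prodMk_nhds tendsto_const_nhds
    simp only [hG, hL, hΦi]
    refine (Tendsto.const_mul _ ?_).mul hSl
    have hq : Tendsto (fun r => 2 * (d r b / r) - u * r⁻¹) atTop (𝓝 (2 * 1 - u * 0)) :=
      ((lim_ratio t b).const_mul 2).sub (tendsto_inv_atTop_zero.const_mul u)
    have e : t + (u - t) = u := by ring
    rw [e]
    norm_num at hq
    rcases le_or_gt u 0 with hu | hu
    · rw [Real.sqrt_eq_zero_of_nonpos (by linarith : 2 * u ≤ 0), inv_zero]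
      refine tendsto_const_nhds.congr' ?_
      filter_upwards [eventually_ge_atTop (|b| - t)] with r hr
      rw [hkey r b u (by linarith), Real.sqrt_eq_zero_of_nonpos (x := u * (2 * d r b - u))]
      · simp
      · have : 0 ≤ d r b := Real.sqrt_nonneg _
        exact mul_nonpos_of_nonpos_of_nonneg hu (by linarith)
    · have hl := ((hq.const_mul u).sqrt).inv₀ (by positivity)
      rw [mul_comm u 2] at hl
      refine hl.congr' ?_
      filter_upwards [eventually_ge_atTop (|b| - t), eventually_gt_atTop 0] with r hr hr0
      rw [hkey r b u (by linarith)]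
      have : u * (2 * (d r b / r) - u * r⁻¹) = u * (2 * d r b - u) / r := by field_simp
      rw [this, Real.sqrt_div' _ hr0.le, inv_div, div_eq_mul_inv]
end

section
/- Let S : ℝ² → ℝ be continuous with compact support and define the two-dimensional time-domain far-field pattern p^∞(x̂,t) := (1/(2√2 π)) ∫_{ℝ²} 1_{{t + x̂·y > 0}} (t + x̂·y)^{−1/2} S(y) dy. Then for every unit vector x̂ ∈ ℝ² and every k > 0, the Abel-regularized temporal Fourier transform of p^∞ satisfies lim_{η→0⁺} ∫_ℝ p^∞(x̂,t) e^{ikt} e^{−ηt} dt = (e^{iπ/4}/√(8πk)) ∫_{ℝ²} e^{−ik x̂·y} S(y) dy. (For each η > 0 the integral converges absolutely, since p^∞(x̂,t) vanishes for t below a finite threshold and decays like t^{−1/2} as t → +∞.) -/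
open MeasureTheory Real Filter
open scoped RealInnerProductSpace Topology

lemma hint_h (η k : ℝ) (hη : 0 < η) :
    Integrable (fun s : ℝ => if 0 < s then ((√s : ℝ) : ℂ)⁻¹ * Complex.exp (-(((η:ℂ) - Complex.I * k) * s)) else 0) ∧
    (∫ s : ℝ, if 0 < s then ((√s : ℝ) : ℂ)⁻¹ * Complex.exp (-(((η:ℂ) - Complex.I * k) * s)) else 0) =
      (π / ((η:ℂ) - Complex.I * k)) ^ (1/2 : ℂ) := by
  have e : (fun s : ℝ => if 0 < s then ((√s : ℝ) : ℂ)⁻¹ * Complex.exp (-(((η:ℂ) - Complex.I * k) * s)) else 0) = (Set.Ioi (0:ℝ)).indicator (fun s : ℝ => ((√s : ℝ) : ℂ)⁻¹ * Complex.exp (-(((η:ℂ) - Complex.I * k) * s))) := by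
    ext s; simp [Set.indicator]
  rw [e]
  constructor
  · rw [integrable_indicator_iff measurableSet_Ioi]
    have := integrableOn_rpow_mul_exp_neg_mul_rpow (p := 1) (s := -1/2) (b := η) (by norm_num) (by norm_num) hη
    refine Integrable.mono this ?_ ?_
    · apply Measurable.aestronglyMeasurable
      fun_prop
    · filter_upwards [ae_restrict_mem measurableSet_Ioi] with s hs
      have hs : 0 < s := hs
      have h1 : s ^ (-1/2 : ℝ) = (√s)⁻¹ := by
        rw [Real.sqrt_eq_rpow, ← Real.rpow_neg hs.le]; norm_num
      rw [h1]
      simp [Complex.norm_exp, abs_of_nonneg (Real.sqrt_nonneg s)]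
  · have hg := integral_gaussian_complex_Ioi (b := (η:ℂ) - Complex.I * k) (by simpa using hη)
    rw [integral_indicator measurableSet_Ioi,
      ← integral_comp_rpow_Ioi _ (p := 2) (by norm_num)]
    have : (π / ((η:ℂ) - Complex.I * k)) ^ (1/2 : ℂ) = 2 * ((π / ((η:ℂ) - Complex.I * k)) ^ (1/2 : ℂ) / 2) := by ring
    rw [this, ← hg, ← integral_const_mul]
    refine setIntegral_congr_fun measurableSet_Ioi fun s hs => ?_
    have hs : 0 < s := hs
    have hs' : (s:ℂ) ≠ 0 := by exact_mod_cast hs.ne'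
    have h3 : (s:ℝ) ^ ((2:ℝ) - 1) = s := by norm_num
    simp only [h3, Real.rpow_two, Real.sqrt_sq hs.le, Complex.real_smul]
    push_cast
    simp
    field_simp
    congr 1
    ring

lemma lim_const (k : ℝ) (hk : 0 < k) :
    ((1 / (2 * √2 * π) : ℝ) : ℂ) * (π / (((0:ℝ):ℂ) - Complex.I * k)) ^ (1/2 : ℂ) =
    Complex.exp (Complex.I * (π : ℂ) / 4) / (Real.sqrt (8 * π * k) : ℂ) := by
  have h1 : (π / (((0:ℝ):ℂ) - Complex.I * k)) = ((π / k : ℝ) : ℂ) * Complex.I := by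
    have : (k:ℂ) ≠ 0 := by exact_mod_cast hk.ne'
    push_cast
    rw [zero_sub, div_eq_iff (by simp [this])]
    field_simp
    simp
  have hpk : 0 < π / k := by positivity
  have h2 : (((π / k : ℝ) : ℂ) * Complex.I) ^ (1/2 : ℂ) = (√(π / k) : ℝ) * Complex.exp (Complex.I * (π : ℂ) / 4) := by
    rw [Complex.cpow_def_of_ne_zero (by simp [hk.ne', pi_ne_zero]), Complex.log_ofReal_mul hpk Complex.I_ne_zero, Complex.log_I,
      Real.sqrt_eq_rpow, Real.rpow_def_of_pos hpk, Complex.ofReal_exp, ← Complex.exp_add]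
    congr 1
    push_cast
    ring
  have h3 : 1 / (2 * √2 * π) * √(π / k) = 1 / √(8 * π * k) := by
    have : √(8 * π * k) = 2 * √2 * √π * √k := by
      rw [Real.sqrt_mul (by positivity), Real.sqrt_mul (by positivity), show (8:ℝ) = 2^2 * 2 by norm_num, Real.sqrt_mul (by positivity), Real.sqrt_sq (by norm_num)]
    rw [this, Real.sqrt_div pi_pos.le]
    have := Real.sq_sqrt pi_pos.le
    have : 0 < √π := by positivity
    have : 0 < √k := by positivity
    field_simp
    linarith
  rw [h1, h2, ← mul_assoc, ← Complex.ofReal_mul, h3]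
  push_cast
  ring

/-- **Time/frequency correspondence of the far-field patterns in 2D** (Theorem 3.4, `d = 2`).
Let `S : ℝ² → ℝ` be continuous with compact support and
`p^∞(x̂,t) = (1/(2√2 π)) ∫_{t + x̂·y > 0} (t + x̂·y)^{−1/2} S(y) dy` be the 2D time-domain
far-field pattern. Then for every unit vector `x̂` and every `k > 0`, the Abel-regularized
temporal Fourier transform satisfies
`lim_{η→0⁺} ∫_ℝ p^∞(x̂,t) e^{ikt} e^{−ηt} dt = (e^{iπ/4}/√(8πk)) ∫_{ℝ²} e^{−ik x̂·y} S(y) dy`. -/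
theorem far_field_fourier_2d
    (S : EuclideanSpace ℝ (Fin 2) → ℝ)
    (hS : Continuous S) (hsupp : HasCompactSupport S)
    (pinf : EuclideanSpace ℝ (Fin 2) → ℝ → ℝ)
    (hpinf : ∀ xhat t, pinf xhat t =
      (1 / (2 * Real.sqrt 2 * π)) *
        ∫ y : EuclideanSpace ℝ (Fin 2),
          if 0 < t + ⟪xhat, y⟫ then (Real.sqrt (t + ⟪xhat, y⟫))⁻¹ * S y else 0)
    (xhat : EuclideanSpace ℝ (Fin 2)) (hxhat : ‖xhat‖ = 1) (k : ℝ) (hk : 0 < k) :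
    Tendsto (fun η : ℝ =>
        ∫ t : ℝ, (pinf xhat t : ℂ) * Complex.exp (Complex.I * (k : ℂ) * (t : ℂ)) *
          (Real.exp (-η * t) : ℂ))
      (𝓝[>] (0 : ℝ))
      (𝓝 ((Complex.exp (Complex.I * (π : ℂ) / 4) / (Real.sqrt (8 * π * k) : ℂ)) *
        ∫ y : EuclideanSpace ℝ (Fin 2),
          Complex.exp (-Complex.I * (k : ℂ) * (⟪xhat, y⟫ : ℂ)) * (S y : ℂ))) := by
  set G : ℝ → EuclideanSpace ℝ (Fin 2) → ℂ := fun η y =>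
    Complex.exp (((η:ℂ) - Complex.I * k) * (⟪xhat, y⟫ : ℝ)) * (S y : ℂ) with hG
  have hGc : Continuous (Function.uncurry G) := by
    simp only [hG, Function.uncurry_def]
    fun_prop
  have hG0 : ∀ η y, y ∉ tsupport S → G η y = 0 := by
    intro η y hy
    simp [hG, image_eq_zero_of_notMem_tsupport hy]
  have hGint : Continuous (fun η => ∫ y, G η y) := by
    rw [← continuousOn_univ]
    exact continuousOn_integral_of_compact_support hsupp hGc.continuousOn (fun p x _ hx => hG0 p x hx)
  have key : ∀ η : ℝ, 0 < η → (∫ t : ℝ, (pinf xhat t : ℂ) * Complex.exp (Complex.I * (k : ℂ) * (t : ℂ)) *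
          (Real.exp (-η * t) : ℂ)) = ((1 / (2 * √2 * π) : ℝ) : ℂ) * (π / ((η:ℂ) - Complex.I * k)) ^ (1/2 : ℂ) * ∫ y, G η y := by
    intro η hη
    obtain ⟨hi, hv⟩ := hint_h η k hη
    set h : ℝ → ℂ := fun s : ℝ => if 0 < s then ((√s : ℝ) : ℂ)⁻¹ * Complex.exp (-(((η:ℂ) - Complex.I * k) * s)) else 0 with hh
    have hm : Measurable h := by
      apply Measurable.ite measurableSet_Ioi <;> fun_prop
    have hGη : Continuous (G η) := by
      simp only [hG]
      fun_prop
    have hGηi : Integrable (G η) :=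
      hGη.integrable_of_hasCompactSupport (HasCompactSupport.intro hsupp (hG0 η))
    have hF : Integrable (Function.uncurry (fun (t : ℝ) (y : EuclideanSpace ℝ (Fin 2)) => h (t + ⟪xhat, y⟫) * G η y)) (volume.prod volume) := by
      rw [integrable_prod_iff']
      · simp only [Function.uncurry_apply_pair]
        constructor
        · refine Eventually.of_forall fun y => ?_
          exact (hi.comp_add_right _).mul_const _
        · simp only [norm_mul]
          simp_rw [integral_mul_const]
          simp_rw [fun y : EuclideanSpace ℝ (Fin 2) => integral_add_right_eq_self (μ := volume) (fun t => ‖h t‖) (⟪xhat, y⟫ : ℝ)]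
          exact hGηi.norm.const_mul _
      · apply Measurable.aestronglyMeasurable
        have h1 : Measurable (fun p : ℝ × EuclideanSpace ℝ (Fin 2) => p.1 + (⟪xhat, p.2⟫ : ℝ)) := by fun_prop
        exact (hm.comp h1).mul (hGη.measurable.comp measurable_snd)
    have hpt : ∀ t : ℝ, (pinf xhat t : ℂ) * Complex.exp (Complex.I * (k : ℂ) * (t : ℂ)) *
          (Real.exp (-η * t) : ℂ) = ((1 / (2 * √2 * π) : ℝ) : ℂ) * ∫ y, h (t + ⟪xhat, y⟫) * G η y := by
      intro t
      rw [hpinf, Complex.ofReal_mul, mul_assoc, mul_assoc, ← integral_complex_ofReal, ← integral_mul_const]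
      congr 1
      refine integral_congr_ae (Eventually.of_forall fun y => ?_)
      simp only [hh, hG]
      split_ifs
      · have : Complex.exp (Complex.I * (k : ℂ) * (t : ℂ)) * (Real.exp (-η * t) : ℂ) =
          Complex.exp (-(((η:ℂ) - Complex.I * k) * ((t + ⟪xhat, y⟫ : ℝ) : ℂ))) * Complex.exp (((η:ℂ) - Complex.I * k) * (⟪xhat, y⟫ : ℝ)) := by
          rw [Complex.ofReal_exp, ← Complex.exp_add, ← Complex.exp_add]
          congr 1
          push_cast
          ring
        rw [this]
        push_cast
        ring
      · simp
    simp_rw [hpt]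
    rw [integral_const_mul, integral_integral_swap hF]
    refine Eq.trans (congrArg _ ?_) (mul_assoc _ _ _).symm
    rw [← hv, ← integral_const_mul]
    refine integral_congr_ae (μ := (volume : Measure (EuclideanSpace ℝ (Fin 2)))) (Eventually.of_forall fun y => ?_)
    have h1 := integral_mul_const (μ := volume) (G η y) (fun t : ℝ => h (t + ⟪xhat, y⟫))
    have h2 := integral_add_right_eq_self (μ := volume) h (⟪xhat, y⟫ : ℝ)
    rw [h2] at h1
    exact h1
  have hlim : ContinuousAt (fun η : ℝ => ((1 / (2 * √2 * π) : ℝ) : ℂ) * (π / ((η:ℂ) - Complex.I * k)) ^ (1/2 : ℂ) * ∫ y, G η y) 0 := by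
    have hk' : (k:ℂ) ≠ 0 := by exact_mod_cast hk.ne'
    refine ContinuousAt.mul (ContinuousAt.mul continuousAt_const ?_) hGint.continuousAt
    refine ContinuousAt.cpow (ContinuousAt.div continuousAt_const (by fun_prop) (by simp [hk'])) continuousAt_const ?_
    right
    have : (π / (((0:ℝ):ℂ) - Complex.I * k)) = ((π / k : ℝ) : ℂ) * Complex.I := by
      push_cast
      rw [zero_sub, div_eq_iff (by simp [hk'])]
      field_simp
      simp
    rw [this]
    simp [hk.ne', pi_ne_zero]
  have hl := hlim.tendsto
  rw [lim_const k hk] at hl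
  have hG00 : ∀ y, G 0 y = Complex.exp (-Complex.I * (k : ℂ) * (⟪xhat, y⟫ : ℂ)) * (S y : ℂ) := by
    intro y; simp [hG]
  simp_rw [hG00] at hl
  refine (hl.mono_left nhdsWithin_le_nhds).congr' ?_
  filter_upwards [self_mem_nhdsWithin] with η hη
  exact (key η hη).symm
end

section
/- Let S : ℝ³ → ℝ be smooth with compact support. Let P : S² × ℝ → ℝ be the time-domain far-field pattern, i.e. P(x̂,t) = (1/(4π)) ∫_{ℝ²} S(−t x̂ + a u + b v) da db for every unit vector x̂ and every (equivalently, some) orthonormal pair u, v completing x̂ to an orthonormal basis of ℝ³. Then for every y ∈ ℝ³, S(y) = (1/(2π²)) ∫_{ℝ³} ( ∫_ℝ P(x/|x|, t − (x/|x|)·y) e^{i|x|t} dt ) dx, where the inner integral converges absolutely for each x ≠ 0 and the outer integral converges absolutely over ℝ³. -/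
open MeasureTheory Real Filter
open scoped RealInnerProductSpace Topology FourierTransform

lemma ff_mp (b : OrthonormalBasis (Fin 3) ℝ (EuclideanSpace ℝ (Fin 3))) :
    MeasurePreserving (fun p : ℝ × (ℝ × ℝ) =>
      (-p.1) • b 0 + p.2.1 • b 1 + p.2.2 • b 2) (volume.prod volume) volume := by
  have h1 : MeasurePreserving (Prod.map (Neg.neg : ℝ → ℝ)
      (MeasurableEquiv.finTwoArrow (α := ℝ)).symm) (volume.prod volume) (volume.prod volume) :=
    (Measure.measurePreserving_neg volume).prod (volume_preserving_finTwoArrow ℝ).symm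
  have h2 := (volume_preserving_piFinSuccAbove (fun _ : Fin 3 => ℝ) 0).symm
  have h3 := b.measurePreserving_repr_symm.comp
    ((PiLp.volume_preserving_toLp (Fin 3)).comp (h2.comp h1))
  convert h3 using 1
  ext1 p
  simp only [Function.comp]
  rw [← b.sum_repr (b.repr.symm _)]
  simp only [Fin.sum_univ_three, LinearIsometryEquiv.apply_symm_apply]
  rfl

lemma ff_basis (e : EuclideanSpace ℝ (Fin 3)) (he : ‖e‖ = 1) :
    ∃ b : OrthonormalBasis (Fin 3) ℝ (EuclideanSpace ℝ (Fin 3)), b 0 = e := by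
  have hv : Orthonormal ℝ (({0} : Set (Fin 3)).domRestrict (fun _ => e)) := by
    refine ⟨fun i => he, fun i j hij => absurd (Subsingleton.elim i j) hij⟩
  obtain ⟨b, hb⟩ := hv.exists_orthonormalBasis_extension_of_card_eq (by simp)
  exact ⟨b, hb 0 rfl⟩

lemma ff_inner
    (S : EuclideanSpace ℝ (Fin 3) → ℝ)
    (hS : Continuous S) (hsupp : HasCompactSupport S)
    (P : EuclideanSpace ℝ (Fin 3) → ℝ → ℝ)
    (hP : ∀ xhat : EuclideanSpace ℝ (Fin 3), ‖xhat‖ = 1 →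
      ∀ u v : EuclideanSpace ℝ (Fin 3), ‖u‖ = 1 → ‖v‖ = 1 →
        ⟪xhat, u⟫ = 0 → ⟪xhat, v⟫ = 0 → ⟪u, v⟫ = 0 →
          ∀ t : ℝ, P xhat t =
            (1 / (4 * π)) * ∫ ab : ℝ × ℝ, S ((-t) • xhat + ab.1 • u + ab.2 • v))
    (y x : EuclideanSpace ℝ (Fin 3)) (hx : x ≠ 0) :
    Integrable (fun t : ℝ =>
          (P (‖x‖⁻¹ • x) (t - ⟪‖x‖⁻¹ • x, y⟫) : ℂ) *
            Complex.exp (Complex.I * (‖x‖ : ℂ) * (t : ℂ))) ∧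
      ∫ t : ℝ, (P (‖x‖⁻¹ • x) (t - ⟪‖x‖⁻¹ • x, y⟫) : ℂ) *
          Complex.exp (Complex.I * (‖x‖ : ℂ) * (t : ℂ)) =
      (1 / (4 * π)) * (Complex.exp (Complex.I * (⟪x, y⟫ : ℝ)) *
        ∫ z, (S z : ℂ) * Complex.exp (-Complex.I * (⟪x, z⟫ : ℝ))) := by
  have hn : ‖x‖ ≠ 0 := norm_ne_zero_iff.mpr hx
  set e := ‖x‖⁻¹ • x with he
  have hxe : x = ‖x‖ • e := by rw [he, smul_smul, mul_inv_cancel₀ hn, one_smul]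
  have he1 : ‖e‖ = 1 := by rw [he, norm_smul, norm_inv, norm_norm, inv_mul_cancel₀ hn]
  obtain ⟨b, hb⟩ := ff_basis e he1
  have hΦ := ff_mp b
  set G : EuclideanSpace ℝ (Fin 3) → ℂ :=
    fun z => (S z : ℂ) * Complex.exp (-Complex.I * (⟪x, z⟫ : ℝ)) with hG
  have hGc : Continuous G := by fun_prop
  have hGs : HasCompactSupport G := by
    have : HasCompactSupport (fun z => (S z : ℂ)) :=
      hsupp.comp_left (g := fun r : ℝ => (r : ℂ)) (by simp)
    exact this.mul_right
  have hGi : Integrable G := hGc.integrable_of_hasCompactSupport hGs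
  have hΦi := hΦ.integrable_comp_of_integrable hGi
  have key : ∀ s : ℝ, ∫ ab : ℝ × ℝ, G ((-s) • b 0 + ab.1 • b 1 + ab.2 • b 2) =
      (4 * π) * ((P e s : ℂ) * Complex.exp (Complex.I * (‖x‖ : ℂ) * (s : ℂ))) := by
    intro s
    have hin : ∀ ab : ℝ × ℝ, ⟪x, (-s) • b 0 + ab.1 • b 1 + ab.2 • b 2⟫ = - (‖x‖ * s) := by
      intro ab
      have : x = ‖x‖ • b 0 := by rw [hb]; exact hxe
      have h0 : ⟪x, b 0⟫ = ‖x‖ := by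
        conv_lhs => rw [this]
        simp [inner_smul_left]
      have h1 : ⟪x, b 1⟫ = 0 := by
        rw [this, inner_smul_left, b.inner_eq_zero (by decide), mul_zero]
      have h2 : ⟪x, b 2⟫ = 0 := by
        rw [this, inner_smul_left, b.inner_eq_zero (by decide), mul_zero]
      rw [inner_add_right, inner_add_right, inner_smul_right, inner_smul_right,
        inner_smul_right, h0, h1, h2]
      ring
    simp only [hG, hin]
    rw [integral_mul_const, integral_complex_ofReal, hP e he1 (b 1) (b 2) (b.norm_eq_one 1)
      (b.norm_eq_one 2) (by rw [← hb]; exact b.inner_eq_zero (by decide))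
      (by rw [← hb]; exact b.inner_eq_zero (by decide)) (b.inner_eq_zero (by decide)) s, hb]
    have hp : (π : ℂ) ≠ 0 := by exact_mod_cast Real.pi_ne_zero
    have : -Complex.I * ((-(‖x‖ * s) : ℝ) : ℂ) = Complex.I * ‖x‖ * s := by push_cast; ring
    rw [this]
    push_cast
    field_simp
  have hp : (π : ℂ) ≠ 0 := by exact_mod_cast Real.pi_ne_zero
  have key' : ∀ s : ℝ, (P e s : ℂ) * Complex.exp (Complex.I * (‖x‖ : ℂ) * (s : ℂ)) =
      (1 / (4 * π)) * ∫ ab : ℝ × ℝ, G ((-s) • b 0 + ab.1 • b 1 + ab.2 • b 2) := by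
    intro s
    rw [key s]; field_simp
  have hshift : ∀ t : ℝ, (P e (t - ⟪e, y⟫) : ℂ) *
      Complex.exp (Complex.I * (‖x‖ : ℂ) * (t : ℂ)) =
      (fun s : ℝ => Complex.exp (Complex.I * (⟪x, y⟫ : ℝ)) * ((1 / (4 * π)) *
        ∫ ab : ℝ × ℝ, G ((-s) • b 0 + ab.1 • b 1 + ab.2 • b 2))) (t - ⟪e, y⟫) := by
    intro t
    have hxy : ⟪x, y⟫ = ‖x‖ * ⟪e, y⟫ := by
      conv_lhs => rw [hxe]
      rw [inner_smul_left]; simp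
    simp only
    rw [← key', mul_left_comm, ← Complex.exp_add, hxy]
    congr 2
    push_cast; ring
  have hI : Integrable (fun s : ℝ => Complex.exp (Complex.I * (⟪x, y⟫ : ℝ)) * ((1 / (4 * π)) *
        ∫ ab : ℝ × ℝ, G ((-s) • b 0 + ab.1 • b 1 + ab.2 • b 2))) :=
    (hΦi.integral_prod_left.const_mul _).const_mul _
  simp only [hshift]
  refine ⟨hI.comp_sub_right _, ?_⟩
  rw [integral_sub_right_eq_self (fun s : ℝ => Complex.exp (Complex.I * (⟪x, y⟫ : ℝ)) *
    ((1 / (4 * π)) * ∫ ab : ℝ × ℝ, G ((-s) • b 0 + ab.1 • b 1 + ab.2 • b 2))),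
    integral_const_mul, integral_const_mul, mul_left_comm]
  congr 2
  rw [← hΦ.map_eq, integral_map hΦ.measurable.aemeasurable hGc.aestronglyMeasurable]
  exact (integral_prod _ hΦi).symm

/-- **Far-field reconstruction formula in 3D** (Theorem 3.5, `d = 3`).
Let `S : ℝ³ → ℝ` be smooth with compact support and let `P(x̂,t)` be the time-domain
far-field pattern, i.e. `P(x̂,t) = (1/(4π)) ∫_{ℝ²} S(−t x̂ + a u + b v) da db` for every
unit vector `x̂` and every orthonormal pair `u, v` completing `x̂` to an orthonormal basis
of `ℝ³`. Then for every `y ∈ ℝ³`, the inner `t`-integral below converges absolutely for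
each `x ≠ 0`, the outer `x`-integral converges absolutely, and
`S(y) = (1/(2π²)) ∫_{ℝ³} ∫_ℝ P(x/|x|, t − (x/|x|)·y) e^{i|x|t} dt dx`. -/
theorem far_field_reconstruction_3d
    (S : EuclideanSpace ℝ (Fin 3) → ℝ)
    (hS : ContDiff ℝ (⊤ : ℕ∞) S) (hsupp : HasCompactSupport S)
    (P : EuclideanSpace ℝ (Fin 3) → ℝ → ℝ)
    (hP : ∀ xhat : EuclideanSpace ℝ (Fin 3), ‖xhat‖ = 1 →
      ∀ u v : EuclideanSpace ℝ (Fin 3), ‖u‖ = 1 → ‖v‖ = 1 →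
        ⟪xhat, u⟫ = 0 → ⟪xhat, v⟫ = 0 → ⟪u, v⟫ = 0 →
          ∀ t : ℝ, P xhat t =
            (1 / (4 * π)) * ∫ ab : ℝ × ℝ, S ((-t) • xhat + ab.1 • u + ab.2 • v))
    (y : EuclideanSpace ℝ (Fin 3)) :
    (∀ x : EuclideanSpace ℝ (Fin 3), x ≠ 0 →
        Integrable (fun t : ℝ =>
          (P (‖x‖⁻¹ • x) (t - ⟪‖x‖⁻¹ • x, y⟫) : ℂ) *
            Complex.exp (Complex.I * (‖x‖ : ℂ) * (t : ℂ)))) ∧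
      Integrable (fun x : EuclideanSpace ℝ (Fin 3) =>
        ∫ t : ℝ, (P (‖x‖⁻¹ • x) (t - ⟪‖x‖⁻¹ • x, y⟫) : ℂ) *
          Complex.exp (Complex.I * (‖x‖ : ℂ) * (t : ℂ))) ∧
      (S y : ℂ) = (1 / (2 * (π : ℂ) ^ 2)) *
        ∫ x : EuclideanSpace ℝ (Fin 3),
          ∫ t : ℝ, (P (‖x‖⁻¹ • x) (t - ⟪‖x‖⁻¹ • x, y⟫) : ℂ) *
            Complex.exp (Complex.I * (‖x‖ : ℂ) * (t : ℂ)) := by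
  have hinner := ff_inner S hS.continuous hsupp P hP y
  refine ⟨fun x hx => (hinner x hx).1, ?_⟩
  have hcs : HasCompactSupport (fun z => (S z : ℂ)) :=
    hsupp.comp_left (g := fun r : ℝ => (r : ℂ)) (by simp)
  have hcd : ContDiff ℝ (⊤ : ℕ∞) (fun z => (S z : ℂ)) := Complex.ofRealCLM.contDiff.comp hS
  set f : SchwartzMap (EuclideanSpace ℝ (Fin 3)) ℂ := hcs.toSchwartzMap hcd with hf
  have hfa : ∀ z, f z = (S z : ℂ) := fun z => rfl
  set K : EuclideanSpace ℝ (Fin 3) → ℂ := fun w =>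
    (1 / (4 * π)) * (Complex.exp ((2 * π * ⟪w, y⟫ : ℝ) * Complex.I) • (𝓕 f) w) with hK
  have hFi : Integrable (𝓕 f : SchwartzMap (EuclideanSpace ℝ (Fin 3)) ℂ) := SchwartzMap.integrable _
  have hKi : Integrable K := by
    refine Integrable.const_mul ?_ _
    refine hFi.norm.mono' ?_ ?_
    · have hc1 : Continuous (fun w : EuclideanSpace ℝ (Fin 3) =>
          Complex.exp ((2 * π * ⟪w, y⟫ : ℝ) * Complex.I)) := by fun_prop
      have hc2 : Continuous (fun w => (𝓕 f) w) := SchwartzMap.continuous _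
      exact (hc1.smul hc2).aestronglyMeasurable
    · refine Eventually.of_forall fun w => ?_
      rw [norm_smul, Complex.norm_exp_ofReal_mul_I, one_mul]
  have hp : (π : ℂ) ≠ 0 := by exact_mod_cast Real.pi_ne_zero
  have hae : (fun x : EuclideanSpace ℝ (Fin 3) =>
        ∫ t : ℝ, (P (‖x‖⁻¹ • x) (t - ⟪‖x‖⁻¹ • x, y⟫) : ℂ) *
          Complex.exp (Complex.I * (‖x‖ : ℂ) * (t : ℂ))) =ᵐ[volume]
      fun x => K ((2 * π)⁻¹ • x) := by
    filter_upwards [compl_mem_ae_iff.mpr (measure_singleton (0 : EuclideanSpace ℝ (Fin 3)))]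
      with x hx
    rw [(hinner x hx).2]
    simp only [hK, SchwartzMap.fourier_coe, Real.fourier_eq', smul_eq_mul, hfa]
    congr 2
    · congr 1
      rw [inner_smul_left]; simp; field_simp
    · congr 1; ext z
      rw [mul_comm]
      congr 2
      rw [inner_smul_right, real_inner_comm]; push_cast; field_simp
  have h2p : (2 * π)⁻¹ ≠ 0 := by positivity
  refine ⟨(hKi.comp_smul h2p).congr hae.symm, ?_⟩
  rw [integral_congr_ae hae, Measure.integral_comp_smul]
  have hinv : ∫ w, K w = (1 / (4 * π)) * (S y : ℂ) := by
    rw [hK, integral_const_mul]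
    congr 1
    rw [← hfa, ← congrFun (f.continuous.fourierInv_fourier_eq f.integrable hFi) y,
      Real.fourierInv_eq']
    rfl
  rw [hinv, finrank_euclideanSpace_fin]
  rw [abs_of_pos (by positivity), Complex.real_smul]
  push_cast
  field_simp
  norm_num
end

section
/- Let S : ℝ² → ℝ be smooth with compact support and define the two-dimensional time-domain far-field pattern p^∞(x̂,t) := (1/(2√2 π)) ∫_{ℝ²} 1_{{t + x̂·y > 0}} (t + x̂·y)^{−1/2} S(y) dy. Then for every y ∈ ℝ², S(y) = (e^{−iπ/4}/√(2π³)) ∫_{ℝ²} √|x| · ( lim_{η→0⁺} ∫_ℝ p^∞(x/|x|, t − (x/|x|)·y) e^{i|x|t} e^{−ηt} dt ) dx, where for each x ≠ 0 and each η > 0 the inner integral converges absolutely and the Abel limit as η → 0⁺ exists. -/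
open MeasureTheory Real Filter
open scoped RealInnerProductSpace Topology

abbrev EE := EuclideanSpace ℝ (Fin 2)

noncomputable def GG (b : ℂ) (t : ℝ) : ℂ :=
  if 0 < t then (((Real.sqrt t)⁻¹ : ℝ) : ℂ) * Complex.exp (-b * t) else 0

lemma GG_eq_ind (b : ℂ) : GG b = (Set.Ioi (0:ℝ)).indicator
    (fun t : ℝ => (((Real.sqrt t)⁻¹ : ℝ) : ℂ) * Complex.exp (-b * t)) := by
  ext t; simp [GG, Set.indicator_apply]

lemma GG_meas (b : ℂ) : Measurable (GG b) := by
  rw [GG_eq_ind]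
  apply Measurable.indicator _ measurableSet_Ioi
  fun_prop

lemma GG_integrable (b : ℂ) (hb : 0 < b.re) : Integrable (GG b) := by
  have h := integrableOn_rpow_mul_exp_neg_mul_rpow (p := 1) (s := -1/2) (b := b.re)
    (by norm_num) one_pos hb
  rw [GG_eq_ind, integrable_indicator_iff measurableSet_Ioi]
  refine Integrable.mono' h (Measurable.aestronglyMeasurable (by fun_prop)) ?_
  refine (ae_restrict_iff' measurableSet_Ioi).2 (Eventually.of_forall fun t ht => ?_)
  have ht' : (0:ℝ) < t := ht
  rw [norm_mul, Complex.norm_exp, Complex.norm_real, Real.norm_of_nonneg (by positivity),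
    Real.sqrt_eq_rpow, ← Real.rpow_neg ht'.le]
  simp [neg_div]

lemma GG_integral (b : ℂ) (hb : 0 < b.re) : ∫ t, GG b t = (π / b) ^ (1/2 : ℂ) := by
  rw [GG_eq_ind, integral_indicator measurableSet_Ioi,
    ← integral_comp_rpow_Ioi_of_pos (p := 2) two_pos]
  have h := integral_gaussian_complex_Ioi hb
  have : ∀ x ∈ Set.Ioi (0:ℝ), (2 * x ^ ((2:ℝ) - 1)) •
      ((((Real.sqrt (x ^ (2:ℝ)))⁻¹ : ℝ) : ℂ) * Complex.exp (-b * ((x ^ (2:ℝ) : ℝ) : ℂ)))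
      = 2 * Complex.exp (-b * (x:ℂ) ^ 2) := by
    intro x hx
    have hx' : (0:ℝ) < x := hx
    have h1 : x ^ (2:ℝ) = x ^ 2 := by norm_cast
    have h2 : x ^ ((2:ℝ) - 1) = x := by norm_num
    rw [h1, h2, Real.sqrt_sq hx'.le, Complex.real_smul]
    push_cast
    have : (x:ℂ) ≠ 0 := by exact_mod_cast hx'.ne'
    field_simp
  rw [setIntegral_congr_fun measurableSet_Ioi this, integral_const_mul, h]
  ring

/-- joint integrand -/
noncomputable def FF (S : EE → ℝ) (u y : EE) (b : ℂ) (q : ℝ × EE) : ℂ :=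
  (S q.2 : ℂ) * Complex.exp (b * ((⟪u, q.2⟫ - ⟪u, y⟫ : ℝ) : ℂ)) *
    GG b (q.1 + (⟪u, q.2⟫ - ⟪u, y⟫))

lemma FF_integrable (S : EE → ℝ) (hc : Continuous S) (hs : HasCompactSupport S) (u y : EE) (b : ℂ)
    (hb : 0 < b.re) : Integrable (FF S u y b) (volume.prod volume) := by
  have hm : Measurable (FF S u y b) := by
    have h1 := GG_meas b
    have h2 : Measurable S := hc.measurable
    unfold FF
    fun_prop
  rw [integrable_prod_iff' hm.aestronglyMeasurable]
  refine ⟨Eventually.of_forall fun z => ?_, ?_⟩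
  · simp only [FF]
    exact ((GG_integrable b hb).comp_add_right _).const_mul _
  · have : ∀ z, ∫ t, ‖FF S u y b (t, z)‖ =
        ‖(S z : ℂ) * Complex.exp (b * ((⟪u, z⟫ - ⟪u, y⟫ : ℝ) : ℂ))‖ * ∫ t, ‖GG b t‖ := by
      intro z
      simp only [FF, norm_mul _ (GG _ _)]
      rw [integral_const_mul, integral_add_right_eq_self (fun t => ‖GG b t‖)]
    simp_rw [this]
    refine Integrable.mul_const (Integrable.norm ?_) _
    apply Continuous.integrable_of_hasCompactSupport
    · fun_prop
    · exact HasCompactSupport.mul_right (hs.comp_left (g := fun x : ℝ => (x : ℂ)) (by simp))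

lemma FF_eq (S : EE → ℝ) (u y z : EE) (r η t : ℝ) :
    FF S u y (η - Complex.I * r) (t, z) =
     ((if 0 < (t - ⟪u, y⟫) + ⟪u, z⟫ then (Real.sqrt ((t - ⟪u, y⟫) + ⟪u, z⟫))⁻¹ * S z else 0 : ℝ) : ℂ)
      * (Complex.exp (Complex.I * (r : ℂ) * (t : ℂ)) * (Real.exp (-η * t) : ℂ)) := by
  have e : t - ⟪u, y⟫ + ⟪u, z⟫ = t + (⟪u, z⟫ - ⟪u, y⟫) := by ring
  simp only [FF, GG, e]
  generalize ⟪u, z⟫ - ⟪u, y⟫ = c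
  split_ifs with h
  · have : Complex.exp (Complex.I * (r : ℂ) * (t : ℂ)) * (Real.exp (-η * t) : ℂ) =
      Complex.exp ((η - Complex.I * r) * c) *
        Complex.exp (-(η - Complex.I * r) * ((t + c : ℝ) : ℂ)) := by
      rw [Complex.ofReal_exp, ← Complex.exp_add, ← Complex.exp_add]
      congr 1; push_cast; ring
    rw [this]; push_cast; ring
  · simp

lemma integrand_eq (S : EE → ℝ)
    (pinf : EE → ℝ → ℝ)
    (hpinf : ∀ xhat t, pinf xhat t =
      (1 / (2 * Real.sqrt 2 * π)) *
        ∫ z : EuclideanSpace ℝ (Fin 2),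
          if 0 < t + ⟪xhat, z⟫ then (Real.sqrt (t + ⟪xhat, z⟫))⁻¹ * S z else 0)
    (u y : EE) (r η t : ℝ) :
    (pinf u (t - ⟪u, y⟫) : ℂ) * Complex.exp (Complex.I * (r : ℂ) * (t : ℂ)) *
      (Real.exp (-η * t) : ℂ) = ((1 / (2 * Real.sqrt 2 * π) : ℝ) : ℂ) *
        ∫ z, FF S u y (η - Complex.I * r) (t, z) := by
  simp_rw [FF_eq]
  rw [integral_mul_const, hpinf, integral_complex_ofReal]
  push_cast; ring

lemma inner_int (S : EE → ℝ) (hc : Continuous S) (hs : HasCompactSupport S) (u y : EE) (b : ℂ)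
    (hb : 0 < b.re) : ∫ t, ∫ z, FF S u y b (t, z) =
      (∫ z, (S z : ℂ) * Complex.exp (b * ((⟪u, z⟫ - ⟪u, y⟫ : ℝ) : ℂ))) * (π / b) ^ (1/2 : ℂ) := by
  rw [integral_integral_swap (f := fun t z => FF S u y b (t, z)) (FF_integrable S hc hs u y b hb),
    ← integral_mul_const]
  congr 1; ext z
  simp only [FF]
  rw [integral_const_mul, integral_add_right_eq_self (GG b), GG_integral b hb]

lemma cont_inner (S : EE → ℝ) (hc : Continuous S) (hs : HasCompactSupport S) (u y : EE) (r : ℝ) :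
    Continuous (fun η : ℝ =>
      ∫ z, (S z : ℂ) * Complex.exp (((η : ℂ) - Complex.I * r) * ((⟪u, z⟫ - ⟪u, y⟫ : ℝ) : ℂ))) := by
  have h := continuous_parametric_integral_of_continuous (μ := (volume : Measure EE))
    (f := fun (η : ℝ) z => (S z : ℂ) * Complex.exp (((η : ℂ) - Complex.I * r) * ((⟪u, z⟫ - ⟪u, y⟫ : ℝ) : ℂ)))
    (by unfold Function.uncurry; fun_prop) hs
  convert h using 2 with η
  symm
  apply setIntegral_eq_integral_of_forall_compl_eq_zero
  intro z hz
  simp [image_eq_zero_of_notMem_tsupport hz]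

lemma limit_val (S : EE → ℝ) (hc : Continuous S) (hs : HasCompactSupport S)
    (pinf : EE → ℝ → ℝ)
    (hpinf : ∀ xhat t, pinf xhat t =
      (1 / (2 * Real.sqrt 2 * π)) *
        ∫ z : EuclideanSpace ℝ (Fin 2),
          if 0 < t + ⟪xhat, z⟫ then (Real.sqrt (t + ⟪xhat, z⟫))⁻¹ * S z else 0)
    (u y : EE) (r : ℝ) (hr : 0 < r) :
    Tendsto (fun η : ℝ => ∫ t : ℝ, (pinf u (t - ⟪u, y⟫) : ℂ) *
        Complex.exp (Complex.I * (r : ℂ) * (t : ℂ)) * (Real.exp (-η * t) : ℂ))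
      (𝓝[>] (0 : ℝ)) (𝓝 (((1 / (2 * Real.sqrt 2 * π) : ℝ) : ℂ) *
       ((∫ z, (S z : ℂ) * Complex.exp (((0:ℝ) - Complex.I * r) * ((⟪u, z⟫ - ⟪u, y⟫ : ℝ) : ℂ))) *
        (π / ((0:ℝ) - Complex.I * r)) ^ (1/2 : ℂ)))) := by
  have h1 : ContinuousAt (fun η : ℝ => ((1 / (2 * Real.sqrt 2 * π) : ℝ) : ℂ) *
       ((∫ z, (S z : ℂ) * Complex.exp (((η:ℝ) - Complex.I * r) * ((⟪u, z⟫ - ⟪u, y⟫ : ℝ) : ℂ))) *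
        (π / ((η:ℝ) - Complex.I * r)) ^ (1/2 : ℂ))) 0 := by
    refine continuousAt_const.mul ((cont_inner S hc hs u y r).continuousAt.mul ?_)
    have hr' : (r : ℂ) ≠ 0 := by exact_mod_cast hr.ne'
    refine ContinuousAt.cpow ?_ continuousAt_const ?_
    · refine continuousAt_const.div (by fun_prop) ?_
      simp [hr']
    · right
      have : (π : ℂ) / ((0:ℝ) - Complex.I * r) = ((π / r : ℝ) : ℂ) * Complex.I := by
        have := Complex.I_sq
        push_cast
        field_simp
        linear_combination (r:ℂ) * this
      rw [this]
      simp [hr.ne', pi_ne_zero]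
  refine (h1.tendsto.mono_left nhdsWithin_le_nhds).congr' ?_
  filter_upwards [self_mem_nhdsWithin] with η hη
  have hη' : (0:ℝ) < η := hη
  simp_rw [integrand_eq S pinf hpinf]
  rw [integral_const_mul, inner_int S hc hs u y _ (by simpa using hη')]

lemma cpow_val (r : ℝ) (hr : 0 < r) : (π / ((0:ℝ) - Complex.I * r)) ^ (1/2 : ℂ) =
    ((Real.sqrt π / Real.sqrt r : ℝ) : ℂ) * Complex.exp (Complex.I * π / 4) := by
  have hr' : (r : ℂ) ≠ 0 := by exact_mod_cast hr.ne'
  have : (π : ℂ) / ((0:ℝ) - Complex.I * r) = ((π / r : ℝ) : ℂ) * Complex.I := by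
    have := Complex.I_sq
    push_cast
    field_simp
    linear_combination (r:ℂ) * this
  have hp : 0 < π / r := by positivity
  have hz : ((π / r : ℝ) : ℂ) * Complex.I ≠ 0 :=
    mul_ne_zero (by exact_mod_cast hp.ne') Complex.I_ne_zero
  rw [this, Complex.cpow_def_of_ne_zero hz, Complex.log_ofReal_mul hp Complex.I_ne_zero,
    Complex.log_I, ← Real.sqrt_div pi_pos.le, Real.sqrt_eq_rpow, Real.rpow_def_of_pos hp,
    Complex.ofReal_exp, ← Complex.exp_add]
  congr 1
  push_cast
  ring

lemma fourier_part (S : EE → ℝ) (hS : ContDiff ℝ (⊤ : ℕ∞) S) (hs : HasCompactSupport S) (y : EE) :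
    ∫ x : EE, ∫ z, (S z : ℂ) * Complex.exp (-Complex.I * ((⟪x, z⟫ - ⟪x, y⟫ : ℝ) : ℂ)) =
      (2 * π) ^ 2 * S y := by
  let f : SchwartzMap EE ℂ := (hs.comp_left (g := fun x : ℝ => (x : ℂ)) (by simp)).toSchwartzMap
    (Complex.ofRealCLM.contDiff.comp hS)
  have hf : ∀ z, f z = (S z : ℂ) := fun z => rfl
  have h1 : (S y : ℂ) = ∫ v : EE, Complex.exp ((↑(2 * π * ⟪v, y⟫) * Complex.I)) •
      ∫ z, Complex.exp ((↑(-2 * π * ⟪z, v⟫) * Complex.I)) • f z := by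
    have : f.toFun y = _ := congrFun (f.continuous.fourierInv_fourier_eq f.integrable
      (FourierTransform.fourier f).integrable).symm y
    rw [Real.fourierInv_eq'] at this
    simp_rw [Real.fourier_eq'] at this
    exact this
  have h2 := Measure.integral_comp_smul (volume : Measure EE)
    (fun x => ∫ z, (S z : ℂ) * Complex.exp (-Complex.I * ((⟪x, z⟫ - ⟪x, y⟫ : ℝ) : ℂ))) (2 * π)
  have h3 : ∫ v : EE, Complex.exp ((↑(2 * π * ⟪v, y⟫) * Complex.I)) •
      ∫ z, Complex.exp ((↑(-2 * π * ⟪z, v⟫) * Complex.I)) • f z =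
     ∫ v : EE, ∫ z, (S z : ℂ) * Complex.exp (-Complex.I *
      ((⟪(2 * π) • v, z⟫ - ⟪(2 * π) • v, y⟫ : ℝ) : ℂ)) := by
    congr 1; ext v
    rw [← integral_smul]
    congr 1; ext z
    rw [smul_smul, ← Complex.exp_add, hf, smul_eq_mul, mul_comm]
    congr 2
    rw [real_inner_smul_left, real_inner_smul_left, real_inner_comm z v]
    push_cast; ring
  rw [h1, h3, h2, finrank_euclideanSpace_fin, Complex.real_smul,
    abs_of_nonneg (by positivity)]
  have : (π : ℂ) ≠ 0 := by exact_mod_cast pi_ne_zero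
  push_cast
  field_simp

/-- **Far-field reconstruction formula in 2D** (Theorem 3.5, `d = 2`).
Let `S : ℝ² → ℝ` be smooth with compact support and
`p^∞(x̂,t) = (1/(2√2 π)) ∫_{t + x̂·y > 0} (t + x̂·y)^{−1/2} S(y) dy` the 2D time-domain
far-field pattern. Then for every `y ∈ ℝ²`: for each `x ≠ 0` and each `η > 0` the inner
regularized `t`-integral converges absolutely, the Abel limit as `η → 0⁺` exists, and
`S(y) = (e^{−iπ/4}/√(2π³)) ∫_{ℝ²} √|x| · ( lim_{η→0⁺} ∫_ℝ p^∞(x/|x|, t − (x/|x|)·y)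
e^{i|x|t} e^{−ηt} dt ) dx` (the Abel limit being expressed via `Filter.limUnder`). -/
theorem far_field_reconstruction_2d
    (S : EuclideanSpace ℝ (Fin 2) → ℝ)
    (hS : ContDiff ℝ (⊤ : ℕ∞) S) (hsupp : HasCompactSupport S)
    (pinf : EuclideanSpace ℝ (Fin 2) → ℝ → ℝ)
    (hpinf : ∀ xhat t, pinf xhat t =
      (1 / (2 * Real.sqrt 2 * π)) *
        ∫ z : EuclideanSpace ℝ (Fin 2),
          if 0 < t + ⟪xhat, z⟫ then (Real.sqrt (t + ⟪xhat, z⟫))⁻¹ * S z else 0)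
    (y : EuclideanSpace ℝ (Fin 2)) :
    (∀ x : EuclideanSpace ℝ (Fin 2), x ≠ 0 → ∀ η : ℝ, 0 < η →
        Integrable (fun t : ℝ =>
          (pinf (‖x‖⁻¹ • x) (t - ⟪‖x‖⁻¹ • x, y⟫) : ℂ) *
            Complex.exp (Complex.I * (‖x‖ : ℂ) * (t : ℂ)) * (Real.exp (-η * t) : ℂ))) ∧
      (∀ x : EuclideanSpace ℝ (Fin 2), x ≠ 0 →
        ∃ L : ℂ, Tendsto (fun η : ℝ =>
          ∫ t : ℝ, (pinf (‖x‖⁻¹ • x) (t - ⟪‖x‖⁻¹ • x, y⟫) : ℂ) *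
            Complex.exp (Complex.I * (‖x‖ : ℂ) * (t : ℂ)) * (Real.exp (-η * t) : ℂ))
          (𝓝[>] (0 : ℝ)) (𝓝 L)) ∧
      (S y : ℂ) =
        (Complex.exp (-Complex.I * (π : ℂ) / 4) / (Real.sqrt (2 * π ^ 3) : ℂ)) *
          ∫ x : EuclideanSpace ℝ (Fin 2),
            (Real.sqrt ‖x‖ : ℂ) *
              limUnder (𝓝[>] (0 : ℝ)) (fun η : ℝ =>
                ∫ t : ℝ, (pinf (‖x‖⁻¹ • x) (t - ⟪‖x‖⁻¹ • x, y⟫) : ℂ) *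
                  Complex.exp (Complex.I * (‖x‖ : ℂ) * (t : ℂ)) *
                  (Real.exp (-η * t) : ℂ)) := by
  have hc : Continuous S := hS.continuous
  have hlim : ∀ x : EuclideanSpace ℝ (Fin 2), x ≠ 0 → _ := fun x hx =>
    limit_val S hc hsupp pinf hpinf (‖x‖⁻¹ • x) y ‖x‖ (norm_pos_iff.2 hx)
  refine ⟨?_, fun x hx => ⟨_, hlim x hx⟩, ?_⟩
  · intro x hx η hη
    simp_rw [integrand_eq S pinf hpinf]
    exact (FF_integrable S hc hsupp _ _ _ (by simpa using hη)).integral_prod_left.const_mul _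
  · set K : ℂ := ((1 / (2 * Real.sqrt 2 * π) : ℝ) : ℂ) *
      ((Real.sqrt π : ℂ) * Complex.exp (Complex.I * π / 4)) with hK
    have hae : ∀ᵐ x : EuclideanSpace ℝ (Fin 2), x ≠ 0 := by
      simp [ae_iff]
    rw [integral_congr_ae (g := fun x => K * ∫ z, (S z : ℂ) *
      Complex.exp (-Complex.I * ((⟪x, z⟫ - ⟪x, y⟫ : ℝ) : ℂ))), integral_const_mul,
      fourier_part S hS hsupp y]
    · rw [hK]
      have he : Complex.exp (-Complex.I * (π : ℂ) / 4) * Complex.exp (Complex.I * π / 4) = 1 := by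
        rw [← Complex.exp_add]; ring_nf; simp
      have hq : Real.sqrt π * (2 * π) ^ 2 = (2 * Real.sqrt 2 * π) * Real.sqrt (2 * π ^ 3) := by
        have h2 := Real.mul_self_sqrt (show (0:ℝ) ≤ 2 by norm_num)
        rw [Real.sqrt_mul (by norm_num), show π ^ 3 = π ^ 2 * π by ring,
          Real.sqrt_mul (by positivity), Real.sqrt_sq pi_pos.le]
        linear_combination (-2 * π ^ 2 * Real.sqrt π) * h2
      have hq' : (Real.sqrt π : ℂ) * (2 * π) ^ 2 =
          (2 * (Real.sqrt 2 : ℂ) * π) * (Real.sqrt (2 * π ^ 3) : ℂ) := by exact_mod_cast hq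
      have n1 : (Real.sqrt (2 * π ^ 3) : ℂ) ≠ 0 := by
        have : Real.sqrt (2 * π ^ 3) ≠ 0 := by positivity
        exact_mod_cast this
      have n2 : (2 * (Real.sqrt 2 : ℂ) * π) ≠ 0 := by
        have : 2 * Real.sqrt 2 * π ≠ 0 := by positivity
        exact_mod_cast this
      push_cast
      generalize (Real.sqrt (2 * π ^ 3) : ℂ) = A at *
      generalize (2 * (Real.sqrt 2 : ℂ) * π) = B at *
      generalize Complex.exp (-Complex.I * (π : ℂ) / 4) = e1 at *
      generalize Complex.exp (Complex.I * (π : ℂ) / 4) = e2 at *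
      rw [eq_comm]
      calc _ = (e1 * e2) * ((Real.sqrt π : ℂ) * (2 * π) ^ 2) / (A * B) * S y := by
            field_simp
        _ = _ := by rw [he, hq']; field_simp
    · filter_upwards [hae] with x hx
      have hx0 := norm_pos_iff.2 hx
      have hs0 : (Real.sqrt ‖x‖ : ℂ) ≠ 0 := by
        have : Real.sqrt ‖x‖ ≠ 0 := by positivity
        exact_mod_cast this
      have hx1 : (‖x‖ : ℂ) ≠ 0 := by exact_mod_cast hx0.ne'
      rw [(hlim x hx).limUnder_eq, cpow_val _ hx0]
      have hi : ∀ z, Complex.exp (((0:ℝ) - Complex.I * ‖x‖) *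
          ((⟪‖x‖⁻¹ • x, z⟫ - ⟪‖x‖⁻¹ • x, y⟫ : ℝ) : ℂ)) =
          Complex.exp (-Complex.I * ((⟪x, z⟫ - ⟪x, y⟫ : ℝ) : ℂ)) := by
        intro z
        congr 1
        rw [real_inner_smul_left, real_inner_smul_left]
        push_cast
        field_simp
        ring
      simp_rw [hi]
      rw [hK]
      push_cast
      field_simp
end

section
/- Let S : ℝ³ → ℝ be smooth with compact support. Let RS(x̂,t) := ∫_{ℝ²} S(−t x̂ + a u + b v) da db denote the planar Radon transform of S (independent of the choice of the orthonormal pair u, v completing the unit vector x̂ to an orthonormal basis of ℝ³), and define the time-domain far-field pattern of the initial displacement source by q^∞(x̂,t) := (1/(4π)) ∂_t RS(x̂,t). Then for every y ∈ ℝ³, S(y) = (1/(2π²)) ∫_{ℝ³} ( ∫_ℝ q^∞(x/|x|, t − (x/|x|)·y) · (i e^{i|x|t}/|x|) dt ) dx, where the inner integral converges absolutely for each x ≠ 0 and the outer integral converges absolutely over ℝ³. -/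
open MeasureTheory Real Filter
open scoped RealInnerProductSpace Topology

abbrev FFE := EuclideanSpace ℝ (Fin 3)

/-- The point with coordinates `(t, p)`. -/
noncomputable def ffPt (b : OrthonormalBasis (Fin 3) ℝ FFE) (t : ℝ) (p : ℝ × ℝ) : FFE :=
  t • b 0 + p.1 • b 1 + p.2 • b 2

lemma ffPt_inner0 (b : OrthonormalBasis (Fin 3) ℝ FFE) (t : ℝ) (p : ℝ × ℝ) :
    ⟪b 0, ffPt b t p⟫ = t := by
  simp [ffPt, inner_add_right, inner_smul_right, b.inner_eq_ite]

lemma ffPt_inner1 (b : OrthonormalBasis (Fin 3) ℝ FFE) (t : ℝ) (p : ℝ × ℝ) :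
    ⟪b 1, ffPt b t p⟫ = p.1 := by
  simp [ffPt, inner_add_right, inner_smul_right, b.inner_eq_ite]

lemma ffPt_inner2 (b : OrthonormalBasis (Fin 3) ℝ FFE) (t : ℝ) (p : ℝ × ℝ) :
    ⟪b 2, ffPt b t p⟫ = p.2 := by
  simp [ffPt, inner_add_right, inner_smul_right, b.inner_eq_ite]

lemma ffPt_bounds (b : OrthonormalBasis (Fin 3) ℝ FFE) (t : ℝ) (p : ℝ × ℝ) :
    |t| ≤ ‖ffPt b t p‖ ∧ |p.1| ≤ ‖ffPt b t p‖ ∧ |p.2| ≤ ‖ffPt b t p‖ := by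
  have h := fun i => abs_real_inner_le_norm (b i) (ffPt b t p)
  have h0 := h 0
  have h1 := h 1
  have h2 := h 2
  rw [ffPt_inner0] at h0
  rw [ffPt_inner1] at h1
  rw [ffPt_inner2] at h2
  simp only [b.norm_eq_one, one_mul] at h0 h1 h2
  exact ⟨h0, h1, h2⟩

lemma ffPt_continuous (b : OrthonormalBasis (Fin 3) ℝ FFE) :
    Continuous (fun q : ℝ × (ℝ × ℝ) => ffPt b q.1 q.2) := by
  unfold ffPt; fun_prop

lemma ff_supp {F : Type*} [NormedAddCommGroup F] {S : FFE → F} (hc : HasCompactSupport S) :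
    ∃ R : ℝ, ∀ z, R < ‖z‖ → S z = 0 := by
  obtain ⟨R, hR⟩ := hc.isBounded.subset_closedBall (0 : FFE)
  refine ⟨R, fun z hz => ?_⟩
  by_contra hne
  have := hR (subset_tsupport S hne)
  simp at this
  linarith

/-- plane integral -/
noncomputable def ffG (b : OrthonormalBasis (Fin 3) ℝ FFE) (S : FFE → ℝ) (t : ℝ) : ℝ :=
  ∫ p : ℝ × ℝ, S (ffPt b t p)

lemma ffG_supp (b : OrthonormalBasis (Fin 3) ℝ FFE) {S : FFE → ℝ} (hc : HasCompactSupport S) :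
    HasCompactSupport (ffG b S) := by
  obtain ⟨R, hR⟩ := ff_supp hc
  refine HasCompactSupport.intro (isCompact_Icc (a := -R) (b := R)) (fun t ht => ?_)
  have : ∀ p, S (ffPt b t p) = 0 := fun p => by
    apply hR
    by_contra hle
    exact ht (abs_le.1 ((ffPt_bounds b t p).1.trans (not_lt.1 hle)))
  simp [ffG, this]

lemma ff_int_slice (b : OrthonormalBasis (Fin 3) ℝ FFE) {S : FFE → ℝ} (hS : Continuous S)
    (hc : HasCompactSupport S) (t : ℝ) : Integrable (fun p => S (ffPt b t p)) := by
  have hcont : Continuous (fun p => S (ffPt b t p)) :=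
    hS.comp ((ffPt_continuous b).comp (by fun_prop : Continuous fun p : ℝ × ℝ => (t, p)))
  refine hcont.integrable_of_hasCompactSupport ?_
  obtain ⟨R, hR⟩ := ff_supp hc
  refine HasCompactSupport.intro
    ((isCompact_Icc (a := -R) (b := R)).prod (isCompact_Icc (a := -R) (b := R))) (fun p hp => ?_)
  apply hR
  by_contra hle
  have := ffPt_bounds b t p
  exact hp ⟨abs_le.1 (this.2.1.trans (not_lt.1 hle)), abs_le.1 (this.2.2.trans (not_lt.1 hle))⟩

lemma ffG_deriv (b : OrthonormalBasis (Fin 3) ℝ FFE) {S : FFE → ℝ} (hS : ContDiff ℝ (⊤ : ℕ∞) S)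
    (hc : HasCompactSupport S) (t : ℝ) :
    HasDerivAt (ffG b S) (ffG b (fun z => fderiv ℝ S z (b 0)) t) t := by
  have hS' : Continuous (fun z => fderiv ℝ S z (b 0)) :=
    (hS.continuous_fderiv (by simp)).clm_apply continuous_const
  have hc' : HasCompactSupport (fun z => fderiv ℝ S z (b 0)) := hc.fderiv_apply ℝ (b 0)
  obtain ⟨R, hR⟩ := ff_supp hc'
  obtain ⟨C, hC⟩ := hS'.bounded_above_of_compact_support hc'
  have key := hasDerivAt_integral_of_dominated_loc_of_deriv_le (μ := (volume : Measure (ℝ × ℝ)))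
    (F := fun t p => S (ffPt b t p)) (F' := fun t p => fderiv ℝ S (ffPt b t p) (b 0)) (x₀ := t)
    (s := Set.univ)
    (bound := (Set.Icc (-R) R ×ˢ Set.Icc (-R) R).indicator (fun _ => C)) univ_mem
    (Eventually.of_forall fun t => (ff_int_slice b hS.continuous hc t).aestronglyMeasurable)
    (ff_int_slice b hS.continuous hc t)
    (ff_int_slice b hS' hc' t).aestronglyMeasurable ?_ ?_ ?_
  · exact key.2
  · refine Eventually.of_forall fun p s _ => ?_
    by_cases hp : p ∈ Set.Icc (-R) R ×ˢ Set.Icc (-R) R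
    · rw [Set.indicator_of_mem hp]; exact hC _
    · rw [Set.indicator_of_notMem hp, hR, norm_zero]
      by_contra hle
      have := ffPt_bounds b s p
      exact hp ⟨abs_le.1 (this.2.1.trans (not_lt.1 hle)), abs_le.1 (this.2.2.trans (not_lt.1 hle))⟩
  · rw [integrable_indicator_iff (measurableSet_Icc.prod measurableSet_Icc)]
    exact continuousOn_const.integrableOn_compact (isCompact_Icc.prod isCompact_Icc)
  · refine Eventually.of_forall fun p s _ => ?_
    have h1 : HasDerivAt (fun t => ffPt b t p) (b 0) s := by
      unfold ffPt
      have := (((hasDerivAt_id s).smul_const (b 0)).add_const (p.1 • b 1)).add_const (p.2 • b 2)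
      simpa using this
    exact ((hS.differentiable (by simp)) _).hasFDerivAt.comp_hasDerivAt s h1

lemma ffG_continuous (b : OrthonormalBasis (Fin 3) ℝ FFE) {S : FFE → ℝ}
    (hS : ContDiff ℝ (⊤ : ℕ∞) S) (hc : HasCompactSupport S) : Continuous (ffG b S) :=
  continuous_iff_continuousAt.2 fun t => (ffG_deriv b hS hc t).continuousAt

lemma ff_mp_s11 (b : OrthonormalBasis (Fin 3) ℝ FFE) :
    ∃ e : ℝ × (ℝ × ℝ) ≃ᵐ FFE, MeasurePreserving e ∧ ∀ q, e q = ffPt b q.1 q.2 := by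
  have h1 := (volume_preserving_piFinSuccAbove (fun _ : Fin 3 => ℝ) 0)
  have h2 := (MeasurePreserving.id (volume : Measure ℝ)).prod (volume_preserving_finTwoArrow ℝ)
  have h3 := (EuclideanSpace.volume_preserving_symm_measurableEquiv_toLp (Fin 3))
  have h4 := b.measurePreserving_repr
  let e : FFE ≃ᵐ ℝ × (ℝ × ℝ) := (b.repr.toHomeomorph.toMeasurableEquiv.trans
    (MeasurableEquiv.toLp 2 (Fin 3 → ℝ)).symm).trans
    ((MeasurableEquiv.piFinSuccAbove (fun _ : Fin 3 => ℝ) 0).trans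
      ((MeasurableEquiv.refl ℝ).prodCongr (MeasurableEquiv.finTwoArrow)))
  have he : MeasurePreserving e := (h2.comp h1).comp (h3.comp h4)
  refine ⟨e.symm, he.symm e, fun q => ?_⟩
  rw [MeasurableEquiv.symm_apply_eq]
  have : ∀ z, e z = (⟪b 0, z⟫, ⟪b 1, z⟫, ⟪b 2, z⟫) := fun z => by
    simp only [← b.repr_apply_apply]
    rfl
  rw [this, ffPt_inner0, ffPt_inner1, ffPt_inner2]

lemma ff_slice (b : OrthonormalBasis (Fin 3) ℝ FFE) {S : FFE → ℝ}
    (hS : Continuous S) (hc : HasCompactSupport S) (r : ℝ) :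
    ∫ z, (S z : ℂ) * Complex.exp (Complex.I * r * (⟪b 0, z⟫ : ℝ)) =
      ∫ t : ℝ, (ffG b S t : ℂ) * Complex.exp (Complex.I * r * t) := by
  obtain ⟨e, he, hq⟩ := ff_mp_s11 b
  have hint : Integrable (fun z : FFE => (S z : ℂ) *
      Complex.exp (Complex.I * r * (⟪b 0, z⟫ : ℝ))) := by
    refine Continuous.integrable_of_hasCompactSupport (by fun_prop) ?_
    exact HasCompactSupport.mul_right (hc.comp_left (g := fun x : ℝ => (x : ℂ)) (by simp))
  rw [← he.integral_comp']
  have hint2 := (he.integrable_comp_emb e.measurableEmbedding).2 hint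
  refine (integral_prod _ hint2).trans ?_
  congr 1 with t
  simp only [Function.comp_apply]
  simp only [hq, ffPt_inner0, ffG]
  rw [integral_mul_const, integral_complex_ofReal]

lemma ff_parts (b : OrthonormalBasis (Fin 3) ℝ FFE) {S : FFE → ℝ}
    (hS : ContDiff ℝ (⊤ : ℕ∞) S) (hc : HasCompactSupport S) (r : ℝ) :
    ∫ t : ℝ, ((deriv (ffG b S) t : ℝ) : ℂ) * Complex.exp (Complex.I * r * t) =
      - (Complex.I * r) * ∫ t : ℝ, (ffG b S t : ℂ) * Complex.exp (Complex.I * r * t) := by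
  have hd : deriv (ffG b S) = ffG b (fun z => fderiv ℝ S z (b 0)) :=
    funext fun t => (ffG_deriv b hS hc t).deriv
  have hS' : ContDiff ℝ (⊤ : ℕ∞) (fun z => fderiv ℝ S z (b 0)) :=
    (hS.fderiv_right (by simp)).clm_apply contDiff_const
  have hc' : HasCompactSupport (fun z => fderiv ℝ S z (b 0)) := hc.fderiv_apply ℝ (b 0)
  rw [hd]
  have hg := ffG_continuous b hS hc
  have hg' := ffG_continuous b hS' hc'
  have hgc : HasCompactSupport (fun t => (ffG b S t : ℂ)) :=
    (ffG_supp b hc).comp_left (g := fun x : ℝ => (x : ℂ)) (by simp)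
  have hgc' : HasCompactSupport (fun t => (ffG b (fun z => fderiv ℝ S z (b 0)) t : ℂ)) :=
    (ffG_supp b hc').comp_left (g := fun x : ℝ => (x : ℂ)) (by simp)
  have key := integral_mul_deriv_eq_deriv_mul_of_integrable
    (u := fun t : ℝ => Complex.exp (Complex.I * r * t))
    (u' := fun t : ℝ => Complex.exp (Complex.I * r * t) * (Complex.I * r))
    (v := fun t => (ffG b S t : ℂ)) (v' := fun t => (ffG b (fun z => fderiv ℝ S z (b 0)) t : ℂ))
    (fun t _ => ?_) (fun t _ => (ffG_deriv b hS hc t).ofReal_comp) ?_ ?_ ?_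
  · rw [← integral_const_mul]
    calc _ = _ := by congr 1 with t; exact mul_comm _ _
      _ = _ := key
      _ = _ := by rw [← integral_neg]; congr 1 with t; ring
  · have h0 : HasDerivAt (fun t : ℝ => Complex.I * r * (t : ℂ)) (Complex.I * r) t := by
      simpa using (Complex.ofRealCLM.hasDerivAt (x := t)).const_mul (Complex.I * r)
    exact h0.cexp
  · exact Continuous.integrable_of_hasCompactSupport (by fun_prop) hgc'.mul_left
  · exact Continuous.integrable_of_hasCompactSupport (by fun_prop) hgc.mul_left
  · exact Continuous.integrable_of_hasCompactSupport (by fun_prop) hgc.mul_left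

lemma ff_basis_s11 (x : FFE) (hx : ‖x‖ = 1) : ∃ b : OrthonormalBasis (Fin 3) ℝ FFE, b 0 = -x := by
  obtain ⟨b, hb⟩ := Orthonormal.exists_orthonormalBasis_extension_of_card_eq (𝕜 := ℝ) (E := FFE)
    (ι := Fin 3) (by simp) (v := fun _ => -x) (s := {0}) (by
      constructor
      · intro i; simp [hx]
      · intro i j hij; exact absurd (Subsingleton.elim i j) hij)
  exact ⟨b, hb 0 rfl⟩

open FourierTransform in
lemma ff_inversion {S : FFE → ℝ} (hS : ContDiff ℝ (⊤ : ℕ∞) S) (hc : HasCompactSupport S)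
    (y : FFE) (K : FFE → ℂ)
    (hK : ∀ x, x ≠ 0 → K x = (1 / (4 * π) : ℝ) * Complex.exp (Complex.I * (⟪x, y⟫ : ℝ)) *
      ∫ z, (S z : ℂ) * Complex.exp (- Complex.I * (⟪x, z⟫ : ℝ))) :
    Integrable K ∧ (S y : ℂ) = (1 / (2 * (π : ℂ) ^ 2)) * ∫ x, K x := by
  have hpi := Real.pi_pos
  have hcC : HasCompactSupport (fun z => (S z : ℂ)) :=
    hc.comp_left (g := fun x : ℝ => (x : ℂ)) (by simp)
  have hSC : ContDiff ℝ (⊤ : ℕ∞) (fun z => (S z : ℂ)) := Complex.ofRealCLM.contDiff.comp hS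
  let f := hcC.toSchwartzMap hSC
  have hf : ∀ z, f z = (S z : ℂ) := fun z => rfl
  have hFint : Integrable (𝓕 (f : FFE → ℂ)) := by
    rw [← SchwartzMap.fourier_coe]; exact (𝓕 f).integrable
  have hinv := Continuous.fourierInv_fourier_eq f.continuous f.integrable hFint
  have h2 := congrFun hinv y
  rw [Real.fourierInv_eq'] at h2
  have hKey : ∀ w : FFE, w ≠ 0 → K ((2 * π) • w) = (1 / (4 * π) : ℝ) *
      (Complex.exp (↑(2 * π * ⟪w, y⟫) * Complex.I) • 𝓕 (f : FFE → ℂ) w) := by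
    intro w hw
    rw [hK _ (smul_ne_zero (by positivity) hw), Real.fourier_eq', mul_assoc, smul_eq_mul]
    congr 2
    · rw [inner_smul_left]; simp [mul_comm]
    · congr 1 with z
      rw [smul_eq_mul, mul_comm, hf]
      congr 2
      rw [inner_smul_left, real_inner_comm]
      simp; ring
  have hne : ∀ᵐ w : FFE, w ≠ 0 := by
    simp [ae_iff]
  have hae : (fun w => K ((2 * π) • w)) =ᵐ[volume] fun w => ((1 / (4 * π) : ℝ) : ℂ) *
      (Complex.exp (↑(2 * π * ⟪w, y⟫) * Complex.I) • 𝓕 (f : FFE → ℂ) w) := by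
    filter_upwards [hne] with w hw using hKey w hw
  constructor
  · rw [← integrable_comp_smul_iff volume K (R := 2 * π) (by positivity), integrable_congr hae]
    refine Integrable.const_mul ?_ _
    refine hFint.bdd_mul (c := 1) ?_ ?_
    · exact Continuous.aestronglyMeasurable (by fun_prop)
    · exact Eventually.of_forall fun w => (Complex.norm_exp_ofReal_mul_I _).le
  · have h3 := Measure.integral_comp_smul volume K (2 * π)
    rw [integral_congr_ae hae, integral_const_mul, h2, hf, abs_of_pos (by positivity)] at h3
    simp only [finrank_euclideanSpace, Fintype.card_fin, Complex.real_smul] at h3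
    have hpc : (π : ℂ) ≠ 0 := by exact_mod_cast hpi.ne'
    push_cast at h3
    field_simp at h3 ⊢
    linear_combination (1/4 : ℂ) * h3

/-- **Far-field reconstruction of the initial displacement in 3D** (Theorem A.2).
Let `S : ℝ³ → ℝ` be smooth with compact support, `RS(x̂,t)` its planar Radon transform
(the integral of `S` over the plane `{x̂·y = −t}`, independent of the orthonormal pair
`u, v` completing `x̂`), and `q^∞(x̂,t) = (1/(4π)) ∂_t RS(x̂,t)` the time-domain far-field
pattern of the initial displacement source. Then for every `y ∈ ℝ³`, the inner
`t`-integral converges absolutely for each `x ≠ 0`, the outer `x`-integral converges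
absolutely, and
`S(y) = (1/(2π²)) ∫_{ℝ³} ∫_ℝ q^∞(x/|x|, t − (x/|x|)·y) · (i e^{i|x|t}/|x|) dt dx`. -/
theorem far_field_reconstruction_displacement_3d
    (S : EuclideanSpace ℝ (Fin 3) → ℝ)
    (hS : ContDiff ℝ (⊤ : ℕ∞) S) (hsupp : HasCompactSupport S)
    (RS : EuclideanSpace ℝ (Fin 3) → ℝ → ℝ)
    (hRS : ∀ xhat : EuclideanSpace ℝ (Fin 3), ‖xhat‖ = 1 →
      ∀ u v : EuclideanSpace ℝ (Fin 3), ‖u‖ = 1 → ‖v‖ = 1 →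
        ⟪xhat, u⟫ = 0 → ⟪xhat, v⟫ = 0 → ⟪u, v⟫ = 0 →
          ∀ t : ℝ, RS xhat t =
            ∫ ab : ℝ × ℝ, S ((-t) • xhat + ab.1 • u + ab.2 • v))
    (qinf : EuclideanSpace ℝ (Fin 3) → ℝ → ℝ)
    (hqinf : ∀ xhat t, qinf xhat t = (1 / (4 * π)) * deriv (RS xhat) t)
    (y : EuclideanSpace ℝ (Fin 3)) :
    (∀ x : EuclideanSpace ℝ (Fin 3), x ≠ 0 →
        Integrable (fun t : ℝ =>
          (qinf (‖x‖⁻¹ • x) (t - ⟪‖x‖⁻¹ • x, y⟫) : ℂ) *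
            (Complex.I * Complex.exp (Complex.I * (‖x‖ : ℂ) * (t : ℂ)) / (‖x‖ : ℂ)))) ∧
      Integrable (fun x : EuclideanSpace ℝ (Fin 3) =>
        ∫ t : ℝ, (qinf (‖x‖⁻¹ • x) (t - ⟪‖x‖⁻¹ • x, y⟫) : ℂ) *
          (Complex.I * Complex.exp (Complex.I * (‖x‖ : ℂ) * (t : ℂ)) / (‖x‖ : ℂ))) ∧
      (S y : ℂ) = (1 / (2 * (π : ℂ) ^ 2)) *
        ∫ x : EuclideanSpace ℝ (Fin 3),
          ∫ t : ℝ, (qinf (‖x‖⁻¹ • x) (t - ⟪‖x‖⁻¹ • x, y⟫) : ℂ) *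
            (Complex.I * Complex.exp (Complex.I * (‖x‖ : ℂ) * (t : ℂ)) / (‖x‖ : ℂ)) := by
  have main : ∀ x : FFE, x ≠ 0 → Integrable (fun t : ℝ =>
          (qinf (‖x‖⁻¹ • x) (t - ⟪‖x‖⁻¹ • x, y⟫) : ℂ) *
            (Complex.I * Complex.exp (Complex.I * (‖x‖ : ℂ) * (t : ℂ)) / (‖x‖ : ℂ))) ∧
      ∫ t : ℝ, (qinf (‖x‖⁻¹ • x) (t - ⟪‖x‖⁻¹ • x, y⟫) : ℂ) *
          (Complex.I * Complex.exp (Complex.I * (‖x‖ : ℂ) * (t : ℂ)) / (‖x‖ : ℂ)) =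
        (1 / (4 * π) : ℝ) * Complex.exp (Complex.I * (⟪x, y⟫ : ℝ)) *
          ∫ z, (S z : ℂ) * Complex.exp (- Complex.I * (⟪x, z⟫ : ℝ)) := by
    intro x hx
    have hnx : ‖x‖ ≠ 0 := norm_ne_zero_iff.2 hx
    have hu : ‖‖x‖⁻¹ • x‖ = 1 := by rw [norm_smul, norm_inv, norm_norm, inv_mul_cancel₀ hnx]
    obtain ⟨b, hb⟩ := ff_basis_s11 _ hu
    have hxh : ‖x‖⁻¹ • x = - b 0 := by rw [hb, neg_neg]
    have hxx : x = ‖x‖ • (- b 0) := by rw [← hxh, smul_smul, mul_inv_cancel₀ hnx, one_smul]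
    have hR : RS (‖x‖⁻¹ • x) = ffG b S := by
      funext t
      rw [hRS _ hu (b 1) (b 2) (by simp) (by simp) (by rw [hxh]; simp [b.inner_eq_ite])
        (by rw [hxh]; simp [b.inner_eq_ite]) (by simp [b.inner_eq_ite])]
      simp [ffG, ffPt, hxh]
    have hd : deriv (ffG b S) = ffG b (fun z => fderiv ℝ S z (b 0)) :=
      funext fun t => (ffG_deriv b hS hsupp t).deriv
    have hS' : ContDiff ℝ (⊤ : ℕ∞) (fun z => fderiv ℝ S z (b 0)) :=
      (hS.fderiv_right (by simp)).clm_apply contDiff_const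
    have hc' : HasCompactSupport (fun z => fderiv ℝ S z (b 0)) := hsupp.fderiv_apply ℝ (b 0)
    have hcont : Continuous (deriv (ffG b S)) := hd ▸ ffG_continuous b hS' hc'
    have hcs : HasCompactSupport (fun t => ((deriv (ffG b S) t : ℝ) : ℂ)) :=
      HasCompactSupport.comp_left (g := fun x : ℝ => (x : ℂ)) (hd ▸ ffG_supp b hc') (by simp)
    set c : ℝ := ⟪‖x‖⁻¹ • x, y⟫ with hcdef
    have hcx : ⟪x, y⟫ = ‖x‖ * c := by
      rw [hcdef, inner_smul_left]; simp; field_simp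
    have hnC : (‖x‖ : ℂ) ≠ 0 := by exact_mod_cast hnx
    have heq : (fun t : ℝ => (qinf (‖x‖⁻¹ • x) (t - c) : ℂ) *
            (Complex.I * Complex.exp (Complex.I * (‖x‖ : ℂ) * (t : ℂ)) / (‖x‖ : ℂ))) =
        fun t : ℝ => (fun s : ℝ => (((1 / (4 * π) : ℝ) : ℂ) *
          Complex.exp (Complex.I * (⟪x, y⟫ : ℝ)) * (Complex.I / ‖x‖)) *
          (((deriv (ffG b S) s : ℝ) : ℂ) * Complex.exp (Complex.I * (‖x‖ : ℝ) * (s : ℂ)))) (t - c) := by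
      funext t
      have : Complex.exp (Complex.I * (‖x‖ : ℂ) * (t : ℂ)) =
          Complex.exp (Complex.I * (⟪x, y⟫ : ℝ)) *
            Complex.exp (Complex.I * (‖x‖ : ℝ) * ((t - c : ℝ) : ℂ)) := by
        rw [← Complex.exp_add, hcx]; congr 1; push_cast; ring
      rw [this, hqinf, hR, Complex.ofReal_mul]
      ring
    rw [heq]
    constructor
    · refine Integrable.comp_sub_right (f := fun s : ℝ => (((1 / (4 * π) : ℝ) : ℂ) *
          Complex.exp (Complex.I * (⟪x, y⟫ : ℝ)) * (Complex.I / ‖x‖)) *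
          (((deriv (ffG b S) s : ℝ) : ℂ) * Complex.exp (Complex.I * (‖x‖ : ℝ) * (s : ℂ)))) ?_ c
      refine Integrable.const_mul ?_ _
      exact Continuous.integrable_of_hasCompactSupport (by fun_prop) hcs.mul_right
    · rw [integral_sub_right_eq_self (fun s : ℝ => (((1 / (4 * π) : ℝ) : ℂ) *
          Complex.exp (Complex.I * (⟪x, y⟫ : ℝ)) * (Complex.I / ‖x‖)) *
          (((deriv (ffG b S) s : ℝ) : ℂ) * Complex.exp (Complex.I * (‖x‖ : ℝ) * (s : ℂ)))) c,
        integral_const_mul, ff_parts b hS hsupp, ← ff_slice b hS.continuous hsupp]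
      have : ∀ z, Complex.exp (Complex.I * (‖x‖ : ℝ) * (⟪b 0, z⟫ : ℝ)) =
          Complex.exp (- Complex.I * (⟪x, z⟫ : ℝ)) := by
        intro z
        have hz : ⟪x, z⟫ = - (‖x‖ * ⟪b 0, z⟫) := by
          conv_lhs => rw [hxx]
          rw [inner_smul_left, inner_neg_left]; simp
        rw [hz]; congr 1; push_cast; ring
      simp only [this]
      field_simp
      rw [Complex.I_sq]; ring
  exact ⟨fun x hx => (main x hx).1, ff_inversion hS hsupp y _ fun x hx => (main x hx).2⟩
end

section
/- Let S : ℝ³ → ℝ be continuous with compact support. Then for every y ∈ ℝ³, lim_{ε→0⁺} (1/(2π²)) ∫_0^∞ k e^{−εk} ( ∫_{ℝ³} (sin(k|y−z|)/|y−z|) S(z) dz ) dk = S(y), where at z = y the integrand sin(k|y−z|)/|y−z| is interpreted by continuity as k. -/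
open MeasureTheory Real Filter
open scoped RealInnerProductSpace Topology
lemma aux_tendsto (n : ℕ) {ε : ℝ} (hε : 0 < ε) :
    Tendsto (fun k : ℝ => k ^ n * Real.exp (-ε * k)) atTop (𝓝 0) := by
  have h := (Real.tendsto_pow_mul_exp_neg_atTop_nhds_zero n).comp
    (tendsto_id.const_mul_atTop hε)
  have h2 := h.const_mul ((ε ^ n)⁻¹)
  rw [mul_zero] at h2
  refine h2.congr fun k => ?_
  have : ε ^ n ≠ 0 := by positivity
  simp only [Function.comp_apply, id, mul_pow]
  rw [neg_mul]
  field_simp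

lemma aux_integrable {ε : ℝ} (hε : 0 < ε) :
    IntegrableOn (fun k : ℝ => k ^ 2 * Real.exp (-ε * k)) (Set.Ioi 0) := by
  have h := integrableOn_rpow_mul_exp_neg_mul_rpow (p := 1) (s := 2) (b := ε)
    (by norm_num) (by norm_num) hε
  refine h.congr_fun (fun k _ => ?_) measurableSet_Ioi
  simp

lemma aux_kernel {ε r : ℝ} (hε : 0 < ε) (hr : 0 < r) :
    ∫ k in Set.Ioi (0 : ℝ), k ^ 2 * Real.exp (-ε * k) * Real.sinc (k * r)
      = 2 * ε / (ε ^ 2 + r ^ 2) ^ 2 := by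
  have hD : 0 < ε ^ 2 + r ^ 2 := by positivity
  set D := ε ^ 2 + r ^ 2 with hDdef
  let F : ℝ → ℝ := fun k => Real.exp (-ε * k) *
    (k * (-ε * Real.sin (k * r) - r * Real.cos (k * r)) / D +
      ((r ^ 2 - ε ^ 2) * Real.sin (k * r) - 2 * ε * r * Real.cos (k * r)) / D ^ 2) / r
  have key := integral_Ioi_of_hasDerivAt_of_tendsto' (f := F) (a := 0) (m := 0)
    (f' := fun k => k ^ 2 * Real.exp (-ε * k) * Real.sinc (k * r)) ?_ ?_ ?_
  · rw [key]
    simp only [F, mul_zero, zero_mul, Real.exp_zero, Real.sin_zero, Real.cos_zero]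
    field_simp
    ring
  · intro k _
    have hkr : HasDerivAt (fun k : ℝ => k * r) r k := by
      simpa using (hasDerivAt_id k).mul_const r
    have he : HasDerivAt (fun k : ℝ => Real.exp (-ε * k)) (Real.exp (-ε * k) * (-ε)) k := by
      simpa using ((hasDerivAt_id k).const_mul (-ε)).exp
    have hs := hkr.sin
    have hc := hkr.cos
    have h := (he.mul ((((hasDerivAt_id k).mul ((hs.const_mul (-ε)).sub (hc.const_mul r))).div_const
      D).add (((hs.const_mul (r ^ 2 - ε ^ 2)).sub (hc.const_mul (2 * ε * r))).div_const
      (D ^ 2)))).div_const r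
    refine h.congr_deriv ?_
    have hsinc : k ^ 2 * Real.exp (-ε * k) * Real.sinc (k * r)
        = k * Real.exp (-ε * k) * Real.sin (k * r) / r := by
      by_cases hk : k = 0
      · simp [hk]
      · rw [Real.sinc_of_ne_zero (by positivity)]
        field_simp
    rw [hsinc]
    simp only [id, Pi.add_apply, Pi.sub_apply, Pi.mul_apply]
    field_simp
    rw [hDdef]
    ring
  · refine Integrable.mono' (aux_integrable hε) ?_ ?_
    · exact (Continuous.aestronglyMeasurable (by fun_prop))
    · refine Eventually.of_forall fun k => ?_
      rw [norm_mul, Real.norm_of_nonneg (by positivity)]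
      exact mul_le_of_le_one_right (by positivity) (Real.abs_sinc_le_one _)
  · have h1 := (aux_tendsto 1 hε).const_mul ((ε + r) / D / r)
    have h0 := (aux_tendsto 0 hε).const_mul ((ε ^ 2 + r ^ 2 + 2 * ε * r) / D ^ 2 / r)
    have h := h1.add h0
    simp only [mul_zero, add_zero] at h
    refine squeeze_zero_norm' ?_ h
    filter_upwards [eventually_ge_atTop 0] with k hk
    have hs1 := Real.sin_le_one (k * r)
    have hs2 := Real.neg_one_le_sin (k * r)
    have hc1 := Real.cos_le_one (k * r)
    have hc2 := Real.neg_one_le_cos (k * r)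
    have hs : |Real.sin (k * r)| ≤ 1 := Real.abs_sin_le_one _
    have hc : |Real.cos (k * r)| ≤ 1 := Real.abs_cos_le_one _
    have e1 : |(-ε * Real.sin (k * r) - r * Real.cos (k * r))| ≤ ε + r := by
      rw [abs_le]; constructor <;> nlinarith
    have e2 : |(r ^ 2 - ε ^ 2) * Real.sin (k * r) - 2 * ε * r * Real.cos (k * r)|
        ≤ ε ^ 2 + r ^ 2 + 2 * ε * r := by
      have hp : 0 < ε * r := by positivity
      rw [abs_le]; constructor <;> nlinarith [sq_nonneg ε, sq_nonneg r]
    simp only [F, Real.norm_eq_abs]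
    rw [abs_div, abs_mul, Real.abs_exp, abs_of_pos hr]
    have e3 : |k * (-ε * Real.sin (k * r) - r * Real.cos (k * r)) / D +
      ((r ^ 2 - ε ^ 2) * Real.sin (k * r) - 2 * ε * r * Real.cos (k * r)) / D ^ 2|
        ≤ k * (ε + r) / D + (ε ^ 2 + r ^ 2 + 2 * ε * r) / D ^ 2 := by
      refine (abs_add_le _ _).trans ?_
      rw [abs_div, abs_div, abs_mul, abs_of_nonneg hk, abs_of_pos hD, abs_of_pos (pow_pos hD 2)]
      gcongr
    calc _ ≤ Real.exp (-ε * k) *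
        (k * (ε + r) / D + (ε ^ 2 + r ^ 2 + 2 * ε * r) / D ^ 2) / r := by gcongr
      _ = _ := by field_simp

lemma aux_radial :
    ∫ r in Set.Ioi (0 : ℝ), r ^ 2 * (1 / (1 + r ^ 2) ^ 2) = π / 4 := by
  let F : ℝ → ℝ := fun r => (Real.arctan r - r / (1 + r ^ 2)) / 2
  have hd : ∀ r ∈ Set.Ici (0 : ℝ), HasDerivAt F (r ^ 2 * (1 / (1 + r ^ 2) ^ 2)) r := by
    intro r _
    have hp : (1 + r ^ 2) ≠ 0 := by positivity
    have h2 : HasDerivAt (fun r : ℝ => 1 + r ^ 2) (2 * r) r := by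
      simpa using (hasDerivAt_pow 2 r).const_add 1
    refine (((Real.hasDerivAt_arctan r).sub ((hasDerivAt_id r).div h2 hp)).div_const 2).congr_deriv ?_
    simp only [id]
    field_simp
    ring
  have ht : Tendsto F atTop (𝓝 (π / 4)) := by
    have h1 : Tendsto (fun r : ℝ => r / (1 + r ^ 2)) atTop (𝓝 0) := by
      refine squeeze_zero' ?_ ?_ tendsto_inv_atTop_zero
      · filter_upwards [eventually_ge_atTop 0] with r hr
        positivity
      · filter_upwards [eventually_gt_atTop 0] with r hr
        rw [div_le_iff₀ (by positivity)]
        field_simp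
        nlinarith
    have h2 := (((Real.tendsto_arctan_atTop.mono_right nhdsWithin_le_nhds).sub h1).div_const 2)
    convert h2 using 2
    ring
  rw [integral_Ioi_of_hasDerivAt_of_nonneg' hd (fun r _ => by positivity) ht]
  simp [F]

lemma aux_mass :
    ∫ x : EuclideanSpace ℝ (Fin 3), (1 / π ^ 2) * (1 / (1 + ‖x‖ ^ 2) ^ 2) = 1 := by
  rw [integral_const_mul]
  have h := integral_fun_norm_addHaar (volume : Measure (EuclideanSpace ℝ (Fin 3)))
    (fun r : ℝ => 1 / (1 + r ^ 2) ^ 2)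
  rw [h]
  simp only [finrank_euclideanSpace, Fintype.card_fin, smul_eq_mul, nsmul_eq_mul, Nat.add_one_sub_one]
  rw [aux_radial, Measure.real, EuclideanSpace.volume_ball_fin_three]
  have hpi := Real.pi_pos
  simp only [ENNReal.ofReal_one, one_pow, one_mul]
  rw [ENNReal.toReal_ofReal (by positivity)]
  push_cast
  field_simp

lemma aux_decay :
    Tendsto (fun x : EuclideanSpace ℝ (Fin 3) =>
      ‖x‖ ^ (Module.finrank ℝ (EuclideanSpace ℝ (Fin 3))) *
        ((1 / π ^ 2) * (1 / (1 + ‖x‖ ^ 2) ^ 2)))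
      (Bornology.cobounded _) (𝓝 0) := by
  simp only [finrank_euclideanSpace, Fintype.card_fin]
  have hpi := Real.pi_pos
  have h1 := ((tendsto_inv_atTop_zero (𝕜 := ℝ)).const_mul (1 / π ^ 2)).comp
    (tendsto_norm_cobounded_atTop (E := EuclideanSpace ℝ (Fin 3)))
  rw [mul_zero] at h1
  refine squeeze_zero' (Eventually.of_forall fun x => by positivity) ?_ h1
  filter_upwards [tendsto_norm_cobounded_atTop.eventually (eventually_gt_atTop 0)] with x hx
  simp only [Function.comp_apply]
  rw [mul_left_comm]
  gcongr
  rw [mul_one_div, div_le_iff₀ (by positivity)]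
  field_simp
  nlinarith [sq_nonneg (‖x‖ ^ 2)]

lemma aux_swap (S : EuclideanSpace ℝ (Fin 3) → ℝ)
    (hS : Continuous S) (hsupp : HasCompactSupport S)
    (y : EuclideanSpace ℝ (Fin 3)) {ε : ℝ} (hε : 0 < ε) :
    ∫ k in Set.Ioi (0 : ℝ), ∫ z : EuclideanSpace ℝ (Fin 3),
        k ^ 2 * Real.exp (-ε * k) * Real.sinc (k * ‖y - z‖) * S z
      = ∫ z : EuclideanSpace ℝ (Fin 3), 2 * ε / (ε ^ 2 + ‖y - z‖ ^ 2) ^ 2 * S z := by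
  rw [integral_integral_swap]
  · refine integral_congr_ae ?_
    filter_upwards [Measure.ae_ne volume y] with z hz
    rw [integral_mul_const, aux_kernel hε (norm_pos_iff.2 (sub_ne_zero.2 (Ne.symm hz)))]
  · have hi : Integrable S := hS.integrable_of_hasCompactSupport hsupp
    refine Integrable.mono (Integrable.mul_prod (aux_integrable hε) hi) ?_ ?_
    · refine Continuous.aestronglyMeasurable ?_
      unfold Function.uncurry
      fun_prop
    · refine Eventually.of_forall fun p => ?_
      simp only [Function.uncurry, norm_mul]
      have := Real.abs_sinc_le_one (p.1 * ‖y - p.2‖)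
      refine mul_le_mul_of_nonneg_right ?_ (norm_nonneg _)
      exact mul_le_of_le_one_right (by positivity) this

open Classical in

/-- **Abel-regularized sine-kernel inversion in 3D** (key identity in the proof of
Theorem 2.2). Let `S : ℝ³ → ℝ` be continuous with compact support. Then for every
`y ∈ ℝ³`,
`lim_{ε→0⁺} (1/(2π²)) ∫_0^∞ k e^{−εk} ∫_{ℝ³} (sin(k|y−z|)/|y−z|) S(z) dz dk = S(y)`,
the integrand at `z = y` being interpreted by continuity as `k`. -/
theorem abel_sine_kernel_inversion_3d
    (S : EuclideanSpace ℝ (Fin 3) → ℝ)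
    (hS : Continuous S) (hsupp : HasCompactSupport S)
    (y : EuclideanSpace ℝ (Fin 3)) :
    Tendsto (fun ε : ℝ =>
        (1 / (2 * π ^ 2)) *
          ∫ k in Set.Ioi (0 : ℝ), k * Real.exp (-ε * k) *
            ∫ z : EuclideanSpace ℝ (Fin 3),
              (if y = z then k else Real.sin (k * ‖y - z‖) / ‖y - z‖) * S z)
      (𝓝[>] (0 : ℝ)) (𝓝 (S y)) := by
  have hi : Integrable S := hS.integrable_of_hasCompactSupport hsupp
  have h := tendsto_integral_comp_smul_smul_of_integrable' (μ := volume)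
    (φ := fun x : EuclideanSpace ℝ (Fin 3) => (1 / π ^ 2) * (1 / (1 + ‖x‖ ^ 2) ^ 2))
    (fun x => by positivity) aux_mass aux_decay hi (hS.continuousAt (x := y))
  refine (h.comp tendsto_inv_nhdsGT_zero).congr' ?_
  filter_upwards [self_mem_nhdsWithin] with ε hε
  have hε : 0 < ε := hε
  have hpi := Real.pi_pos
  have e : ∀ k : ℝ, k * Real.exp (-ε * k) * ∫ z : EuclideanSpace ℝ (Fin 3),
        (if y = z then k else Real.sin (k * ‖y - z‖) / ‖y - z‖) * S z
      = ∫ z : EuclideanSpace ℝ (Fin 3),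
        k ^ 2 * Real.exp (-ε * k) * Real.sinc (k * ‖y - z‖) * S z := by
    intro k
    rw [← integral_const_mul]
    congr 1
    ext z
    have : (if y = z then k else Real.sin (k * ‖y - z‖) / ‖y - z‖)
        = k * Real.sinc (k * ‖y - z‖) := by
      split_ifs with hz
      · simp [hz]
      · have hn : ‖y - z‖ ≠ 0 := norm_ne_zero_iff.2 (sub_ne_zero.2 hz)
        by_cases hk : k = 0
        · simp [hk]
        · rw [Real.sinc_of_ne_zero (mul_ne_zero hk hn)]
          field_simp
    rw [this]
    ring
  simp only [e]
  rw [aux_swap S hS hsupp y hε, ← integral_const_mul]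
  simp only [Function.comp_apply]
  congr 1
  ext z
  simp only [finrank_euclideanSpace, Fintype.card_fin, smul_eq_mul, norm_smul, norm_inv,
    Real.norm_of_nonneg hε.le]
  have : 0 < ε ^ 2 + ‖y - z‖ ^ 2 := by positivity
  field_simp
end

section
/- Define J₀ : ℝ → ℝ by the integral representation J₀(s) := (1/π) ∫_0^π cos(s sin θ) dθ (the Bessel function of the first kind of order zero). Let S : ℝ² → ℝ be continuous with compact support. Then for every y ∈ ℝ², lim_{ε→0⁺} (1/(2π)) ∫_0^∞ k e^{−εk} ( ∫_{ℝ²} J₀(k|y−z|) S(z) dz ) dk = S(y). -/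
open MeasureTheory Real Filter
open scoped RealInnerProductSpace Topology

/-- The Bessel function of the first kind of order zero, defined by the integral
representation `J₀(s) = (1/π) ∫_0^π cos(s sin θ) dθ`. -/
noncomputable def besselJ0 (s : ℝ) : ℝ :=
  (1 / π) * ∫ θ in (0 : ℝ)..π, Real.cos (s * Real.sin θ)


theorem aux_int_kexp {ε : ℝ} (hε : 0 < ε) :
    IntegrableOn (fun k : ℝ => k * Real.exp (-ε * k)) (Set.Ioi 0) := by
  simpa using integrableOn_rpow_mul_exp_neg_mul_rpow (p := 1) (s := 1) (b := ε)
    (by norm_num) one_pos hε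

theorem aux_laplace (a : ℝ) :
    ∫ k in Set.Ioi (0 : ℝ), k * Real.exp (-1 * k) * Real.cos (k * a)
      = (1 - a ^ 2) / (1 + a ^ 2) ^ 2 := by
  have hD : (1 + a ^ 2) ≠ 0 := by positivity
  set D := 1 + a ^ 2 with hDdef
  have hint : IntegrableOn (fun k : ℝ => k * Real.exp (-1 * k) * Real.cos (k * a))
      (Set.Ioi 0) := by
    refine (aux_int_kexp one_pos).mul_bdd (c := 1) ?_ ?_
    · exact Continuous.aestronglyMeasurable (by fun_prop)
    · exact Eventually.of_forall fun k => by
        simpa using Real.abs_cos_le_one (k * a)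
  let F : ℝ → ℝ := fun k => -(Real.exp (-1 * k) * ((k / D + (1 - a ^ 2) / D ^ 2) * Real.cos (k * a)
    - (k * a / D + 2 * a / D ^ 2) * Real.sin (k * a)))
  have hder : ∀ x ∈ Set.Ici (0 : ℝ),
      HasDerivAt F (x * Real.exp (-1 * x) * Real.cos (x * a)) x := by
    intro x _
    have hid := hasDerivAt_id x
    have h1 : HasDerivAt (fun k : ℝ => Real.exp (-1 * k)) (Real.exp (-1 * x) * (-1 * 1)) x :=
      (hid.const_mul (-1)).exp
    have h2 : HasDerivAt (fun k : ℝ => Real.cos (k * a)) (-Real.sin (x * a) * (1 * a)) x :=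
      (hid.mul_const a).cos
    have h3 : HasDerivAt (fun k : ℝ => Real.sin (k * a)) (Real.cos (x * a) * (1 * a)) x :=
      (hid.mul_const a).sin
    have h4 : HasDerivAt (fun k : ℝ => k / D + (1 - a ^ 2) / D ^ 2) (1 / D) x :=
      (hid.div_const D).add_const _
    have h5 : HasDerivAt (fun k : ℝ => k * a / D + 2 * a / D ^ 2) (1 * a / D) x :=
      ((hid.mul_const a).div_const D).add_const _
    have := (h1.mul ((h4.mul h2).sub (h5.mul h3))).neg
    refine this.congr_deriv ?_
    simp only [Pi.mul_apply, Pi.sub_apply]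
    field_simp
    rw [hDdef]
    ring
  have hlim : Tendsto F atTop (𝓝 0) := by
    have e1 : Tendsto (fun k : ℝ => Real.exp (-1 * k)) atTop (𝓝 0) := by
      simpa using Real.tendsto_exp_neg_atTop_nhds_zero
    have e2 : Tendsto (fun k : ℝ => k * Real.exp (-1 * k)) atTop (𝓝 0) := by
      simpa using Real.tendsto_pow_mul_exp_neg_atTop_nhds_zero 1
    have bc : ∀ u : ℝ → ℝ, Tendsto u atTop (𝓝 0) →
        Tendsto (fun k => u k * Real.cos (k * a)) atTop (𝓝 0) := fun u hu =>
      hu.zero_mul_isBoundedUnder_le (isBoundedUnder_of ⟨1, fun k => by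
        simpa using Real.abs_cos_le_one (k * a)⟩)
    have bs : ∀ u : ℝ → ℝ, Tendsto u atTop (𝓝 0) →
        Tendsto (fun k => u k * Real.sin (k * a)) atTop (𝓝 0) := fun u hu =>
      hu.zero_mul_isBoundedUnder_le (isBoundedUnder_of ⟨1, fun k => by
        simpa using Real.abs_sin_le_one (k * a)⟩)
    have := ((((bc _ e2).const_mul (1 / D)).add ((bc _ e1).const_mul ((1 - a ^ 2) / D ^ 2))).sub
      (((bs _ e2).const_mul (a / D)).add ((bs _ e1).const_mul (2 * a / D ^ 2)))).neg
    simp only [mul_zero, add_zero, sub_zero, neg_zero] at this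
    refine this.congr fun k => ?_
    simp only [F]
    ring
  rw [integral_Ioi_of_hasDerivAt_of_tendsto' hder hint hlim]
  simp [F]

theorem aux_angular (ρ : ℝ) :
    ∫ θ in (0 : ℝ)..π, (1 - (ρ * Real.sin θ) ^ 2) / (1 + (ρ * Real.sin θ) ^ 2) ^ 2
      = π * (1 / Real.sqrt (1 + ρ ^ 2) ^ 3) := by
  have hm : 0 < Real.sqrt (1 + ρ ^ 2) := Real.sqrt_pos.2 (by positivity)
  have hm2 : Real.sqrt (1 + ρ ^ 2) ^ 2 = 1 + ρ ^ 2 := Real.sq_sqrt (by positivity)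
  set m := Real.sqrt (1 + ρ ^ 2) with hmdef
  have hρ : ρ ^ 2 = m ^ 2 - 1 := by linarith
  let G : ℝ → ℝ := fun θ => 1 / m ^ 3 * (θ + Real.arctan ((m - 1) * (Real.sin θ * Real.cos θ) /
      (Real.cos θ ^ 2 + m * Real.sin θ ^ 2)))
    + (m ^ 2 - 1) / m ^ 2 * (Real.sin θ * Real.cos θ / (Real.cos θ ^ 2 + m ^ 2 * Real.sin θ ^ 2))
  have hder : ∀ x ∈ Set.uIcc (0 : ℝ) π, HasDerivAt G
      ((1 - (ρ * Real.sin x) ^ 2) / (1 + (ρ * Real.sin x) ^ 2) ^ 2) x := by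
    intro x _
    have hcs := Real.sin_sq_add_cos_sq x
    have hs := Real.hasDerivAt_sin x
    have hc := Real.hasDerivAt_cos x
    have hsc : HasDerivAt (fun θ => Real.sin θ * Real.cos θ)
        (Real.cos x * Real.cos x + Real.sin x * (-Real.sin x)) x := hs.mul hc
    have hden : ∀ q : ℝ, HasDerivAt (fun θ => Real.cos θ ^ 2 + q * Real.sin θ ^ 2)
        (2 * Real.cos x * (-Real.sin x) + q * (2 * Real.sin x * Real.cos x)) x := by
      intro q
      have := (hc.pow 2).add ((hs.pow 2).const_mul q)
      refine this.congr_deriv ?_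
      push_cast
      ring
    have hpos : ∀ q : ℝ, 0 < q → 0 < Real.cos x ^ 2 + q * Real.sin x ^ 2 := by
      intro q hq
      by_cases h : Real.sin x = 0
      · rw [h] at hcs ⊢; nlinarith
      · have : 0 < Real.sin x ^ 2 := by positivity
        have := mul_pos hq this
        positivity
    have p1 := hpos m hm
    have p2 := hpos (m ^ 2) (by positivity)
    have hA := ((hsc.const_mul (m - 1)).div (hden m) p1.ne').arctan
    have hB := hsc.div (hden (m ^ 2)) p2.ne'
    have := (((hasDerivAt_id x).add hA).const_mul (1 / m ^ 3)).add
      (hB.const_mul ((m ^ 2 - 1) / m ^ 2))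
    refine this.congr_deriv ?_
    simp only [Pi.div_apply]
    have hD : 1 + (ρ * Real.sin x) ^ 2 = Real.cos x ^ 2 + m ^ 2 * Real.sin x ^ 2 := by
      rw [mul_pow, hρ]; linarith
    have hN : 1 - (ρ * Real.sin x) ^ 2 = Real.cos x ^ 2 + 2 * Real.sin x ^ 2
        - m ^ 2 * Real.sin x ^ 2 := by
      rw [mul_pow, hρ]; linarith
    rw [hD, hN]
    generalize Real.sin x = s at *
    generalize Real.cos x = c at *
    have key : 1 + 1 / (1 + ((m - 1) * (s * c) / (c ^ 2 + m * s ^ 2)) ^ 2) *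
        (((m - 1) * (c * c + s * -s) * (c ^ 2 + m * s ^ 2) -
          (m - 1) * (s * c) * (2 * c * -s + m * (2 * s * c))) / (c ^ 2 + m * s ^ 2) ^ 2)
        = m / (c ^ 2 + m ^ 2 * s ^ 2) := by
      have hq : 1 + ((m - 1) * (s * c) / (c ^ 2 + m * s ^ 2)) ^ 2
          = (c ^ 2 + m ^ 2 * s ^ 2) / (c ^ 2 + m * s ^ 2) ^ 2 := by
        rw [div_pow, eq_div_iff (by positivity), add_mul, div_mul_cancel₀ _ (by positivity)]
        have h1 : c ^ 2 + m ^ 2 * s ^ 2 = (c ^ 2 + m ^ 2 * s ^ 2) * (s ^ 2 + c ^ 2) := by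
          rw [hcs, mul_one]
        rw [h1]; ring
      rw [hq]
      have hc2 : c ^ 2 = 1 - s ^ 2 := by linarith
      field_simp
      simp only [hc2]
      ring
    rw [key]
    have hc2 : c ^ 2 = 1 - s ^ 2 := by linarith
    field_simp
    simp only [hc2]
    ring
  rw [intervalIntegral.integral_eq_sub_of_hasDerivAt hder]
  · simp [G]; ring
  · apply Continuous.intervalIntegrable
    refine Continuous.div (by fun_prop) (by fun_prop) fun x => by positivity

theorem aux_J0_cont : Continuous besselJ0 := by
  unfold besselJ0
  refine continuous_const.mul ?_
  exact intervalIntegral.continuous_parametric_intervalIntegral_of_continuous'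
    (by fun_prop) 0 π

theorem aux_J0_bdd (s : ℝ) : |besselJ0 s| ≤ 1 := by
  unfold besselJ0
  have h := intervalIntegral.norm_integral_le_of_norm_le_const (a := 0) (b := π) (C := 1)
    (f := fun θ => Real.cos (s * Real.sin θ)) (fun θ _ => by
      simpa using Real.abs_cos_le_one _)
  rw [Real.norm_eq_abs, sub_zero, abs_of_pos Real.pi_pos, one_mul] at h
  rw [abs_mul, abs_of_pos (by positivity : 0 < 1 / π), one_div, inv_mul_le_iff₀ Real.pi_pos, mul_one]
  exact h

theorem aux_K1 (ρ : ℝ) :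
    ∫ k in Set.Ioi (0 : ℝ), k * Real.exp (-1 * k) * besselJ0 (k * ρ)
      = 1 / Real.sqrt (1 + ρ ^ 2) ^ 3 := by
  have hpi := Real.pi_pos
  have h1 : ∀ k : ℝ, k * Real.exp (-1 * k) * besselJ0 (k * ρ)
      = (1 / π) * ∫ θ in Set.Ioc (0 : ℝ) π,
        k * Real.exp (-1 * k) * Real.cos (k * (ρ * Real.sin θ)) := by
    intro k
    rw [besselJ0, intervalIntegral.integral_of_le hpi.le, integral_const_mul]
    simp only [mul_assoc]
    ring
  simp_rw [h1]
  rw [integral_const_mul, integral_integral_swap]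
  · simp_rw [aux_laplace]
    rw [← intervalIntegral.integral_of_le hpi.le, aux_angular]
    field_simp
  · have hc : Integrable (fun _ : ℝ => (1 : ℝ)) (volume.restrict (Set.Ioc 0 π)) :=
      integrable_const _
    have := ((aux_int_kexp one_pos).integrable.mul_prod hc).mul_bdd (c := 1)
      (g := fun p : ℝ × ℝ => Real.cos (p.1 * (ρ * Real.sin p.2)))
      (Continuous.aestronglyMeasurable (by fun_prop))
      (Eventually.of_forall fun p => by simpa using Real.abs_cos_le_one _)
    simpa [Function.uncurry_def] using this

theorem aux_Keps {ε : ℝ} (hε : 0 < ε) (r : ℝ) :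
    ∫ k in Set.Ioi (0 : ℝ), k * Real.exp (-ε * k) * besselJ0 (k * r)
      = (ε⁻¹) ^ 2 * (1 / Real.sqrt (1 + (ε⁻¹ * r) ^ 2) ^ 3) := by
  have h := integral_comp_mul_left_Ioi
    (fun k => k * Real.exp (-1 * k) * besselJ0 (k * (ε⁻¹ * r))) 0 hε
  rw [mul_zero, aux_K1, smul_eq_mul] at h
  rw [pow_two, mul_assoc, ← h, ← integral_const_mul]
  congr 1
  ext k
  have : ε * k * (ε⁻¹ * r) = k * r := by field_simp
  rw [this]
  field_simp

theorem aux_norm : ∫ x : EuclideanSpace ℝ (Fin 2),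
    1 / (2 * π) * (1 / Real.sqrt (1 + ‖x‖ ^ 2) ^ 3) = 1 := by
  rw [integral_const_mul,
    integral_fun_norm_addHaar volume (fun r : ℝ => 1 / Real.sqrt (1 + r ^ 2) ^ 3)]
  have hI : ∫ r in Set.Ioi (0 : ℝ), r * (1 / Real.sqrt (1 + r ^ 2) ^ 3) = 1 := by
    have hder : ∀ x ∈ Set.Ici (0 : ℝ), HasDerivAt (fun r : ℝ => -(Real.sqrt (1 + r ^ 2))⁻¹)
        (x * (1 / Real.sqrt (1 + x ^ 2) ^ 3)) x := by
      intro x _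
      have h0 : 0 < 1 + x ^ 2 := by positivity
      have hs : 0 < Real.sqrt (1 + x ^ 2) := Real.sqrt_pos.2 h0
      have h1 : HasDerivAt (fun r : ℝ => 1 + r ^ 2) (2 * x) x := by
        simpa using (hasDerivAt_pow 2 x).const_add 1
      refine ((h1.sqrt h0.ne').inv hs.ne').neg.congr_deriv ?_
      field_simp
    have hlim : Tendsto (fun r : ℝ => -(Real.sqrt (1 + r ^ 2))⁻¹) atTop (𝓝 0) := by
      rw [← neg_zero]
      refine (Tendsto.inv_tendsto_atTop ?_).neg
      refine Real.tendsto_sqrt_atTop.comp (tendsto_atTop_add_const_left _ _ ?_)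
      exact tendsto_pow_atTop (by norm_num)
    rw [integral_Ioi_of_hasDerivAt_of_nonneg' hder ?_ hlim]
    · simp
    · intro x hx
      have : 0 < x := hx
      positivity
  have hv : (volume : Measure (EuclideanSpace ℝ (Fin 2))).real (Metric.ball 0 1) = π := by
    simp [Measure.real, EuclideanSpace.volume_ball_fin_two, Real.pi_pos.le]
  simp only [finrank_euclideanSpace, Fintype.card_fin, hv, smul_eq_mul]
  norm_num at hI ⊢
  rw [hI]
  field_simp

theorem abel_bessel_kernel_inversion_2d
    (S : EuclideanSpace ℝ (Fin 2) → ℝ)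
    (hS : Continuous S) (hsupp : HasCompactSupport S)
    (y : EuclideanSpace ℝ (Fin 2)) :
    Tendsto (fun ε : ℝ =>
        (1 / (2 * π)) *
          ∫ k in Set.Ioi (0 : ℝ), k * Real.exp (-ε * k) *
            ∫ z : EuclideanSpace ℝ (Fin 2), besselJ0 (k * ‖y - z‖) * S z)
      (𝓝[>] (0 : ℝ)) (𝓝 (S y)) := by
  have hSint : Integrable S := hS.integrable_of_hasCompactSupport hsupp
  have hdec : Tendsto (fun x : EuclideanSpace ℝ (Fin 2) =>
      ‖x‖ ^ Module.finrank ℝ (EuclideanSpace ℝ (Fin 2)) *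
        (1 / (2 * π) * (1 / Real.sqrt (1 + ‖x‖ ^ 2) ^ 3)))
      (Bornology.cobounded _) (𝓝 0) := by
    have h0 : Tendsto (fun x : EuclideanSpace ℝ (Fin 2) => 1 / (2 * π) * ‖x‖⁻¹)
        (Bornology.cobounded _) (𝓝 0) := by
      simpa using (tendsto_norm_cobounded_atTop.inv_tendsto_atTop).const_mul (1 / (2 * π))
    refine squeeze_zero' (Eventually.of_forall fun x => by positivity) ?_ h0
    filter_upwards [tendsto_norm_cobounded_atTop.eventually_gt_atTop 0] with x hx
    rw [finrank_euclideanSpace, Fintype.card_fin, mul_left_comm]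
    refine mul_le_mul_of_nonneg_left ?_ (by positivity)
    have hle : ‖x‖ ≤ Real.sqrt (1 + ‖x‖ ^ 2) := Real.le_sqrt_of_sq_le (by linarith)
    have h3 : ‖x‖ ^ 3 ≤ Real.sqrt (1 + ‖x‖ ^ 2) ^ 3 := by gcongr
    calc ‖x‖ ^ 2 * (1 / Real.sqrt (1 + ‖x‖ ^ 2) ^ 3) ≤ ‖x‖ ^ 2 * (1 / ‖x‖ ^ 3) := by gcongr
      _ = ‖x‖⁻¹ := by field_simp
  have hmain := (tendsto_integral_comp_smul_smul_of_integrable'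
    (μ := (volume : Measure (EuclideanSpace ℝ (Fin 2))))
    (φ := fun x => 1 / (2 * π) * (1 / Real.sqrt (1 + ‖x‖ ^ 2) ^ 3))
    (fun x => by positivity) aux_norm hdec hSint (hS.continuousAt (x := y))).comp
    tendsto_inv_nhdsGT_zero
  refine hmain.congr' ?_
  filter_upwards [self_mem_nhdsWithin] with ε hε
  have hε : 0 < ε := hε
  simp only [Function.comp_apply]
  have hsw : ∫ k in Set.Ioi (0 : ℝ), k * Real.exp (-ε * k) *
            ∫ z : EuclideanSpace ℝ (Fin 2), besselJ0 (k * ‖y - z‖) * S z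
      = ∫ z : EuclideanSpace ℝ (Fin 2), ∫ k in Set.Ioi (0 : ℝ),
          k * Real.exp (-ε * k) * (besselJ0 (k * ‖y - z‖) * S z) := by
    simp_rw [← integral_const_mul]
    rw [integral_integral_swap]
    have hJ := aux_J0_cont
    have := ((aux_int_kexp hε).integrable.mul_prod hSint).bdd_mul (c := 1)
      (f := fun p : ℝ × EuclideanSpace ℝ (Fin 2) => besselJ0 (p.1 * ‖y - p.2‖))
      (Continuous.aestronglyMeasurable (by fun_prop))
      (Eventually.of_forall fun p => by simpa using aux_J0_bdd _)
    refine this.congr (Eventually.of_forall fun p => ?_)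
    simp only [Function.uncurry_def]
    ring
  rw [hsw, ← integral_const_mul]
  congr 1
  ext z
  simp_rw [← mul_assoc]
  rw [integral_mul_const, aux_Keps hε, finrank_euclideanSpace, Fintype.card_fin, norm_smul,
    Real.norm_of_nonneg (inv_pos.2 hε).le, smul_eq_mul]
  ring
end
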